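/- arXiv:1905.05465 — 2 statements merged into one kernel-verified Lean document; each statement's English description precedes it below -/
import Mathlib

section
/- Let a < 0 < b be real numbers, let V₀ be continuous on [a,b] and smooth on [a,0] and on [0,b], and set Ψ₀ = exp(V₀). Suppose λ₀ > 0 and u₀ : [a,b] → ℝ is a strictly monotone C¹ function with u₀(0) = 0, u₀'(a) = u₀'(b) = 0, satisfying u₀''(x) + V₀'(x)·u₀'(x) = −λ₀·u₀(x) for all x in (a,0) and in (0,b), and suppose λ₀ = λ[Ψ₀,[a,b]] (i.e. λ₀ is the first nonzero Neumann eigenvalue, realized variationally as the Poincaré constant). Then for every smooth function V on [a,b] such that V'(x) ≥ V₀'(x) for all x ∈ [a,0) and V'(x) ≤ V₀'(x) for all x ∈ (0,b], the density Ψ = exp(V) satisfies λ[Ψ,[a,b]] ≥ λ₀. -/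
open MeasureTheory Filter

/-- The function `s_κ` from the paper. -/
noncomputable def sKappa (κ θ : ℝ) : ℝ :=
  if 0 < κ then Real.sin (Real.sqrt κ * θ) / Real.sqrt κ
  else if κ < 0 then Real.sinh (Real.sqrt (-κ) * θ) / Real.sqrt (-κ)
  else θ

/-- The support of the measure `h · 𝓛¹`. -/
noncomputable def measSupport (h : ℝ → ℝ) : Set ℝ :=
  {x : ℝ | ∀ ε > 0,
    0 < (MeasureTheory.volume.withDensity (fun y => ENNReal.ofReal (h y))) (Metric.ball x ε)}

/-- A one-dimensional `MCP(K,N)` density. -/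
def IsMCPDensity (K N : ℝ) (h : ℝ → ℝ) : Prop :=
  (∀ x, 0 ≤ h x) ∧ MeasureTheory.LocallyIntegrable h MeasureTheory.volume ∧
  ∀ x₀ ∈ measSupport h, ∀ x₁ ∈ measSupport h,
    (0 < K → x₀ ≠ x₁ → |x₁ - x₀| < Real.pi / Real.sqrt (K / (N - 1))) ∧
    ∀ t ∈ Set.Icc (0:ℝ) 1,
      (sKappa (K / (N - 1)) ((1 - t) * |x₁ - x₀|) / sKappa (K / (N - 1)) |x₁ - x₀|) ^ (N - 1)
          * h x₀
        ≤ h (t * x₁ + (1 - t) * x₀)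

/-- The model density `h_{K,N,D}`. -/
noncomputable def modelDensity (K N D : ℝ) (x : ℝ) : ℝ :=
  if x ∈ Set.Icc 0 (D / 2) then sKappa (K / (N - 1)) (D - x) ^ (N - 1)
  else if x ∈ Set.Icc (D / 2) D then sKappa (K / (N - 1)) x ^ (N - 1)
  else 0

/-- Locally Lipschitz functions on a subset `I` of the reals. -/
def LocLipschitzOn (f : ℝ → ℝ) (I : Set ℝ) : Prop :=
  ∀ x ∈ I, ∃ ε > 0, ∃ C : NNReal, LipschitzOnWith C f (I ∩ Metric.ball x ε)

/-- The local Lipschitz slope `|∇f|(x)` relative to `I`. -/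
noncomputable def slopeOn (f : ℝ → ℝ) (I : Set ℝ) (x : ℝ) : ℝ :=
  Filter.limsup (fun y => |f y - f x| / |y - x|) (nhdsWithin x (I \ {x}))

/-- The Poincaré constant `λ[h, I]` of the density `h` on `I`. -/
noncomputable def poincareConst (h : ℝ → ℝ) (I : Set ℝ) : ℝ :=
  sInf { r : ℝ | ∃ f : ℝ → ℝ, LocLipschitzOn f I ∧
    (∫ x in I, f x * h x) = 0 ∧
    (0 < ∫ x in I, (f x) ^ 2 * h x) ∧
    MeasureTheory.IntegrableOn (fun x => (f x) ^ 2 * h x) I ∧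
    r = (∫ x in I, (slopeOn f I x) ^ 2 * h x) / (∫ x in I, (f x) ^ 2 * h x) }

/-!
Let `w = exp V`. To the right of the zero `c` of `u` (the left side is its mirror image),
Cauchy–Schwarz with weight `u'` bounds `|g x|²` by `u x ∫_c^x g'² / u'` whenever `g c = 0`.
Integrating this against `w`, exchanging the integrals, and inserting the flux bound
`lam ∫_t^b u w ≤ u' t * w t` (integrate `(u' w)' ≤ -lam u w`; this is where the comparison of
drifts enters) gives the Hardy inequality `lam ∫ g² w ≤ ∫ g'² w`. It applies to `g = f - f c`, and
subtracting a constant from a function of weighted mean zero only increases its weighted square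
integral.
-/

section

open Set
open scoped ENNReal Topology

section WeightedHardy

variable {α : Type*} [MeasurableSpace α] {μ : Measure α} {f ρ : α → ℝ≥0∞}

theorem sq_lintegral_le_lintegral_mul_lintegral_sq_div (hf : AEMeasurable f μ)
    (hρ : AEMeasurable ρ μ) (hρ₀ : ∀ᵐ x ∂μ, ρ x ≠ 0) (hρ_top : ∀ᵐ x ∂μ, ρ x ≠ ∞) :
    (∫⁻ x, f x ∂μ) ^ 2 ≤ (∫⁻ x, ρ x ∂μ) * ∫⁻ x, f x ^ 2 / ρ x ∂μ := by
  have hsplit : ∫⁻ x, f x ∂μ = ∫⁻ x, ρ x ^ (1 / 2 : ℝ) * (f x ^ 2 / ρ x) ^ (1 / 2 : ℝ) ∂μ := by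
    refine lintegral_congr_ae ?_
    filter_upwards [hρ₀, hρ_top] with x hx₀ hx_top
    rw [← ENNReal.mul_rpow_of_nonneg _ _ (by norm_num), ENNReal.mul_div_cancel hx₀ hx_top,
      ← ENNReal.rpow_natCast_mul]
    norm_num
  have hHolder := ENNReal.lintegral_mul_norm_pow_le hρ ((hf.pow_const 2).div hρ)
    (p := 1 / 2) (q := 1 / 2) (by norm_num) (by norm_num) (by norm_num)
  calc (∫⁻ x, f x ∂μ) ^ 2
      ≤ ((∫⁻ x, ρ x ∂μ) ^ (1 / 2 : ℝ) * (∫⁻ x, f x ^ 2 / ρ x ∂μ) ^ (1 / 2 : ℝ)) ^ 2 := by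
        rw [hsplit]
        gcongr
        exact hHolder
    _ = (∫⁻ x, ρ x ∂μ) * ∫⁻ x, f x ^ 2 / ρ x ∂μ := by
        rw [mul_pow, ← ENNReal.rpow_mul_natCast, ← ENNReal.rpow_mul_natCast]
        norm_num

variable [LinearOrder α] [TopologicalSpace α] [OrderClosedTopology α] [SecondCountableTopology α]
  [OpensMeasurableSpace α] [SFinite μ]

theorem lintegral_lintegral_Iio_mul {h : α → ℝ≥0∞} (hf : AEMeasurable f μ) (hh : AEMeasurable h μ) :
    ∫⁻ x, (∫⁻ t in Iio x, f t ∂μ) * h x ∂μ = ∫⁻ t, f t * ∫⁻ x in Ioi t, h x ∂μ ∂μ := by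
  let k : α → α → ℝ≥0∞ := fun x t =>
    {z : α × α | z.2 < z.1}.indicator (fun z => f z.2 * h z.1) (x, t)
  have hk : AEMeasurable (Function.uncurry k) (μ.prod μ) :=
    (hf.comp_snd.mul hh.comp_fst).indicator (measurableSet_lt measurable_snd measurable_fst)
  have hk_left (x : α) : ∫⁻ t, k x t ∂μ = (∫⁻ t in Iio x, f t ∂μ) * h x := by
    rw [← lintegral_mul_const'' _ hf.restrict, ← lintegral_indicator measurableSet_Iio]
    rfl
  have hk_right (t : α) : ∫⁻ x, k x t ∂μ = f t * ∫⁻ x in Ioi t, h x ∂μ := by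
    rw [← lintegral_const_mul'' _ hh.restrict, ← lintegral_indicator measurableSet_Ioi]
    rfl
  simp_rw [← hk_left, ← hk_right]
  exact lintegral_lintegral_swap hk

theorem mul_lintegral_sq_lintegral_Iio_mul_le {U w : α → ℝ≥0∞} {lam : ℝ≥0∞}
    (hf : AEMeasurable f μ) (hρ : AEMeasurable ρ μ) (hU : AEMeasurable U μ) (hw : AEMeasurable w μ)
    (hρ₀ : ∀ᵐ t ∂μ, ρ t ≠ 0) (hρ_top : ∀ᵐ t ∂μ, ρ t ≠ ∞)
    (hρU : ∀ᵐ x ∂μ, ∫⁻ t in Iio x, ρ t ∂μ ≤ U x)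
    (hUw : ∀ᵐ t ∂μ, lam * ∫⁻ x in Ioi t, U x * w x ∂μ ≤ ρ t * w t) :
    lam * ∫⁻ x, (∫⁻ t in Iio x, f t ∂μ) ^ 2 * w x ∂μ ≤ ∫⁻ t, f t ^ 2 * w t ∂μ := by
  have hfρ : AEMeasurable (fun t => f t ^ 2 / ρ t) μ := (hf.pow_const 2).div hρ
  calc lam * ∫⁻ x, (∫⁻ t in Iio x, f t ∂μ) ^ 2 * w x ∂μ
      ≤ lam * ∫⁻ x, (∫⁻ t in Iio x, f t ^ 2 / ρ t ∂μ) * (U x * w x) ∂μ := by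
        gcongr lam * ?_
        refine lintegral_mono_ae (hρU.mono fun x hx => ?_)
        rw [mul_left_comm, ← mul_assoc]
        gcongr
        refine (sq_lintegral_le_lintegral_mul_lintegral_sq_div hf.restrict hρ.restrict
          (ae_restrict_of_ae hρ₀) (ae_restrict_of_ae hρ_top)).trans ?_
        gcongr
    _ = lam * ∫⁻ t, f t ^ 2 / ρ t * ∫⁻ x in Ioi t, U x * w x ∂μ ∂μ := by
        rw [lintegral_lintegral_Iio_mul hfρ (hU.fun_mul hw)]
    _ ≤ ∫⁻ t, lam * (f t ^ 2 / ρ t * ∫⁻ x in Ioi t, U x * w x ∂μ) ∂μ :=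
        lintegral_const_mul_le _ _
    _ ≤ ∫⁻ t, f t ^ 2 * w t ∂μ := by
        refine lintegral_mono_ae ?_
        filter_upwards [hρ₀, hρ_top, hUw] with t ht₀ ht_top ht
        calc lam * (f t ^ 2 / ρ t * ∫⁻ x in Ioi t, U x * w x ∂μ)
            ≤ f t ^ 2 / ρ t * (ρ t * w t) := by
              rw [mul_left_comm]
              gcongr
          _ = f t ^ 2 * w t := by rw [← mul_assoc, ENNReal.div_mul_cancel ht₀ ht_top]

end WeightedHardy

section Primitives

variable {a b x : ℝ} {g u u' h p p' : ℝ → ℝ}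

theorem enorm_sub_le_lintegral_enorm_deriv (hax : a ≤ x)
    (hg : AbsolutelyContinuousOnInterval g a x) :
    ‖g x - g a‖ₑ ≤ ∫⁻ t in Ioo a x, ‖deriv g t‖ₑ := by
  rw [← hg.integral_deriv_eq_sub, intervalIntegral.integral_of_le hax, integral_Ioc_eq_integral_Ioo]
  exact enorm_integral_le_lintegral_enorm _

theorem ofReal_intervalIntegral_eq_lintegral_Ioo (hab : a ≤ b)
    (hh : IntervalIntegrable h volume a b) (hh_nonneg : ∀ t ∈ Ioo a b, 0 ≤ h t) :
    ENNReal.ofReal (∫ t in a..b, h t) = ∫⁻ t in Ioo a b, .ofReal (h t) := by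
  rw [intervalIntegral.integral_of_le hab, integral_Ioc_eq_integral_Ioo]
  exact ofReal_integral_eq_lintegral_ofReal
    (((intervalIntegrable_iff_integrableOn_Ioc_of_le hab).1 hh).mono_set Ioo_subset_Ioc_self)
    (ae_restrict_of_forall_mem measurableSet_Ioo hh_nonneg)

theorem lintegral_ofReal_eq_ofReal_sub_of_hasDerivAt (hax : a ≤ x) (hu : ContinuousOn u (Icc a x))
    (hu' : ∀ t ∈ Ioo a x, HasDerivAt u (u' t) t) (hu'_nonneg : ∀ t ∈ Ioo a x, 0 ≤ u' t) :
    ∫⁻ t in Ioo a x, .ofReal (u' t) = .ofReal (u x - u a) := by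
  have hint : IntervalIntegrable u' volume a x :=
    (intervalIntegrable_iff_integrableOn_Ioc_of_le hax).2
      (intervalIntegral.integrableOn_deriv_of_nonneg hu hu' hu'_nonneg)
  rw [← ofReal_intervalIntegral_eq_lintegral_Ioo hax hint hu'_nonneg,
    intervalIntegral.integral_eq_sub_of_hasDerivAt_of_le hax hu hu' hint]

theorem integral_le_of_hasDerivAt_le_neg (hh : ContinuousOn h (Icc a b))
    (hp_nonneg : ∀ t ∈ Ioo a b, 0 ≤ p t) (hp : ∀ t ∈ Ioo a b, HasDerivAt p (p' t) t)
    (hp' : ∀ t ∈ Ioo a b, p' t ≤ -h t) (hx : x ∈ Ioo a b) :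
    ∫ t in x..b, h t ≤ p x := by
  have hprim : ContinuousOn (fun y => ∫ t in x..y, h t) (uIcc x b) :=
    intervalIntegral.continuousOn_primitive_interval
      (hh.mono (uIcc_subset_Icc (Ioo_subset_Icc_self hx)
        ⟨(hx.1.trans hx.2).le, le_rfl⟩)).integrableOn_uIcc
  rw [uIcc_of_le hx.2.le] at hprim
  have hlim : Tendsto (fun y => ∫ t in x..y, h t) (𝓝[Ioo x b] b) (𝓝 (∫ t in x..b, h t)) :=
    (hprim b ⟨hx.2.le, le_rfl⟩).mono_left (nhdsWithin_mono _ Ioo_subset_Icc_self)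
  have := right_nhdsWithin_Ioo_neBot hx.2
  refine le_of_tendsto hlim (eventually_mem_nhdsWithin.mono fun y hy => ?_)
  have hsub : Icc x y ⊆ Ioo a b := Icc_subset_Ioo hx.1 hy.2
  have hdecrease := intervalIntegral.sub_le_integral_of_hasDeriv_right_of_le hy.1.le
    (fun t ht => (hp t (hsub ht)).continuousAt.continuousWithinAt)
    (fun t ht => (hp t (hsub (Ioo_subset_Icc_self ht))).hasDerivWithinAt)
    (hh.mono (hsub.trans Ioo_subset_Icc_self)).neg.integrableOn_Icc
    (fun t ht => hp' t (hsub (Ioo_subset_Icc_self ht)))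
  simp only [Pi.neg_apply, intervalIntegral.integral_neg] at hdecrease
  linarith [hp_nonneg y ⟨hx.1.trans hy.1, hy.2⟩]

theorem nonneg_of_hasDerivAt_of_monotoneOn {s : Set ℝ} {d : ℝ} (hu : MonotoneOn u s) (hs : s ∈ 𝓝 x)
    (hd : HasDerivAt u d x) : 0 ≤ d := by
  rw [← hd.deriv, ← derivWithin_of_mem_nhds hs]
  exact hu.derivWithin_nonneg

theorem hasDerivAt_Ioo_union_Ioo_of_hasDerivWithinAt_Icc {c : ℝ} (hc : c ∈ Icc a b)
    (hu : ∀ t ∈ Icc a b, HasDerivWithinAt u (u' t) (Icc a b) t) :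
    ∀ t ∈ Ioo a c ∪ Ioo c b, HasDerivAt u (u' t) t := by
  intro t ht
  have hmem : t ∈ Ioo a b :=
    union_subset (Ioo_subset_Ioo_right hc.2) (Ioo_subset_Ioo_left hc.1) ht
  exact (hu t (Ioo_subset_Icc_self hmem)).hasDerivAt (Icc_mem_nhds hmem.1 hmem.2)

end Primitives

section Supersolutions

/-- `u` is a strictly increasing supersolution on `[a, b]` of the Sturm–Liouville equation
`(w u')' = -lam w u`. Multiplying the inequality by `u` makes it invariant under the reflection
`u x ↦ -u (-x)`: it reads `(w u')' ≤ -lam w u` where `u > 0` and `(w u')' ≥ -lam w u` where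
`u < 0`. -/
structure IsIncreasingSupersolution (lam : ℝ) (w u u' : ℝ → ℝ) (a b : ℝ) : Prop where
  continuousOn_weight : ContinuousOn w (Icc a b)
  weight_pos : ∀ x ∈ Icc a b, 0 < w x
  continuousOn : ContinuousOn u (Icc a b)
  strictMonoOn : StrictMonoOn u (Icc a b)
  hasDerivAt : ∀ x ∈ Ioo a b, HasDerivAt u (u' x) x
  differentiableAt_flux : ∀ x ∈ Ioo a b, DifferentiableAt ℝ (fun y => u' y * w y) x
  mul_deriv_flux_le : ∀ x ∈ Ioo a b,
    u x * deriv (fun y => u' y * w y) x ≤ -(lam * (u x ^ 2 * w x))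

namespace IsIncreasingSupersolution

variable {a b lam x : ℝ} {w u u' : ℝ → ℝ}

theorem continuousOn_mul_weight (h : IsIncreasingSupersolution lam w u u' a b) :
    ContinuousOn (fun x => u x * w x) (Icc a b) :=
  h.continuousOn.mul h.continuousOn_weight

theorem deriv_nonneg (h : IsIncreasingSupersolution lam w u u' a b) (hx : x ∈ Ioo a b) :
    0 ≤ u' x :=
  nonneg_of_hasDerivAt_of_monotoneOn h.strictMonoOn.monotoneOn (Icc_mem_nhds hx.1 hx.2)
    (h.hasDerivAt x hx)

theorem pos (h : IsIncreasingSupersolution lam w u u' a b) (hua : 0 ≤ u a) (hx : x ∈ Ioc a b) :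
    0 < u x :=
  hua.trans_lt (h.strictMonoOn ⟨le_rfl, hx.1.le.trans hx.2⟩ (Ioc_subset_Icc_self hx) hx.1)

theorem mul_integral_le_flux (h : IsIncreasingSupersolution lam w u u' a b) (hua : 0 ≤ u a)
    (hx : x ∈ Ioo a b) :
    lam * ∫ t in x..b, u t * w t ≤ u' x * w x := by
  rw [← intervalIntegral.integral_const_mul]
  refine integral_le_of_hasDerivAt_le_neg (h := fun t => lam * (u t * w t))
    (p := fun t => u' t * w t) (h.continuousOn_mul_weight.const_mul lam)
    (fun t ht => mul_nonneg (h.deriv_nonneg ht) (h.weight_pos t (Ioo_subset_Icc_self ht)).le)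
    (fun t ht => (h.differentiableAt_flux t ht).hasDerivAt) (fun t ht => ?_) hx
  refine le_of_mul_le_mul_left ?_ (h.pos hua (Ioo_subset_Ioc_self ht))
  linarith [h.mul_deriv_flux_le t ht]

theorem deriv_pos (h : IsIncreasingSupersolution lam w u u' a b) (hlam : 0 < lam) (hua : 0 ≤ u a)
    (hx : x ∈ Ioo a b) :
    0 < u' x := by
  have hsub : Icc x b ⊆ Icc a b := Icc_subset_Icc_left hx.1.le
  have htail : 0 < ∫ t in x..b, u t * w t :=
    intervalIntegral.intervalIntegral_pos_of_pos_on
      ((h.continuousOn_mul_weight.mono hsub).intervalIntegrable_of_Icc hx.2.le)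
      (fun t ht => mul_pos (h.pos hua ⟨hx.1.trans ht.1, ht.2.le⟩)
        (h.weight_pos t (hsub (Ioo_subset_Icc_self ht)))) hx.2
  exact pos_of_mul_pos_left ((mul_pos hlam htail).trans_le (h.mul_integral_le_flux hua hx))
    (h.weight_pos x (Ioo_subset_Icc_self hx)).le

theorem mul_lintegral_le_flux (h : IsIncreasingSupersolution lam w u u' a b) (hlam : 0 ≤ lam)
    (hua : 0 ≤ u a) (hx : x ∈ Ioo a b) :
    ENNReal.ofReal lam * ∫⁻ t in Ioo x b, .ofReal (u t) * .ofReal (w t)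
      ≤ .ofReal (u' x) * .ofReal (w x) := by
  have hsub : Icc x b ⊆ Icc a b := Icc_subset_Icc_left hx.1.le
  have hu_nonneg : ∀ t ∈ Ioo x b, 0 ≤ u t := fun t ht => (h.pos hua ⟨hx.1.trans ht.1, ht.2.le⟩).le
  calc ENNReal.ofReal lam * ∫⁻ t in Ioo x b, .ofReal (u t) * .ofReal (w t)
      = ENNReal.ofReal lam * ∫⁻ t in Ioo x b, .ofReal (u t * w t) := by
        congr 1
        exact setLIntegral_congr_fun measurableSet_Ioo fun t ht =>
          (ENNReal.ofReal_mul (hu_nonneg t ht)).symm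
    _ = .ofReal (lam * ∫ t in x..b, u t * w t) := by
        rw [ENNReal.ofReal_mul hlam, ofReal_intervalIntegral_eq_lintegral_Ioo hx.2.le
          ((h.continuousOn_mul_weight.mono hsub).intervalIntegrable_of_Icc hx.2.le) fun t ht =>
            mul_nonneg (hu_nonneg t ht) (h.weight_pos t (hsub (Ioo_subset_Icc_self ht))).le]
    _ ≤ .ofReal (u' x * w x) := ENNReal.ofReal_le_ofReal (h.mul_integral_le_flux hua hx)
    _ = .ofReal (u' x) * .ofReal (w x) := ENNReal.ofReal_mul (h.deriv_nonneg hx)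

theorem aemeasurable_deriv (h : IsIncreasingSupersolution lam w u u' a b) :
    AEMeasurable u' (volume.restrict (Ioo a b)) :=
  (measurable_deriv u).aemeasurable.congr
    (ae_restrict_of_forall_mem measurableSet_Ioo fun x hx => (h.hasDerivAt x hx).deriv)

theorem mul_lintegral_sq_le (h : IsIncreasingSupersolution lam w u u' a b) (hlam : 0 < lam)
    (hua : 0 ≤ u a) {f : ℝ → ℝ≥0∞} (hf : AEMeasurable f (volume.restrict (Ioo a b))) :
    ENNReal.ofReal lam * ∫⁻ x in Ioo a b, (∫⁻ t in Ioo a x, f t) ^ 2 * .ofReal (w x)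
      ≤ ∫⁻ t in Ioo a b, f t ^ 2 * .ofReal (w t) := by
  have hIio : ∀ x ∈ Ioo a b, (volume.restrict (Ioo a b)).restrict (Iio x)
      = volume.restrict (Ioo a x) := fun x hx => by
    rw [Measure.restrict_restrict measurableSet_Iio, Iio_inter_Ioo, min_eq_left hx.2.le]
  have hIoi : ∀ x ∈ Ioo a b, (volume.restrict (Ioo a b)).restrict (Ioi x)
      = volume.restrict (Ioo x b) := fun x hx => by
    rw [Measure.restrict_restrict measurableSet_Ioi, Ioi_inter_Ioo, sup_eq_left.2 hx.1.le]
  have hae {P : ℝ → Prop} (hP : ∀ x ∈ Ioo a b, P x) : ∀ᵐ x ∂volume.restrict (Ioo a b), P x :=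
    ae_restrict_of_forall_mem measurableSet_Ioo hP
  refine le_of_eq_of_le ?_ (mul_lintegral_sq_lintegral_Iio_mul_le
    (μ := volume.restrict (Ioo a b)) (lam := .ofReal lam) (ρ := fun t => .ofReal (u' t))
    (U := fun x => .ofReal (u x))
    hf h.aemeasurable_deriv.ennreal_ofReal
    ((h.continuousOn.mono Ioo_subset_Icc_self).aemeasurable measurableSet_Ioo).ennreal_ofReal
    ((h.continuousOn_weight.mono Ioo_subset_Icc_self).aemeasurable measurableSet_Ioo).ennreal_ofReal
    (hae fun t ht => (ENNReal.ofReal_pos.2 (h.deriv_pos hlam hua ht)).ne')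
    (ae_of_all _ fun t => ENNReal.ofReal_ne_top) (hae fun x hx => ?_) (hae fun t ht => ?_))
  · congr 1
    exact setLIntegral_congr_fun measurableSet_Ioo fun x hx => by simp only [hIio x hx]
  · have hsub : Icc a x ⊆ Icc a b := Icc_subset_Icc_right hx.2.le
    have hsub' : Ioo a x ⊆ Ioo a b := Ioo_subset_Ioo_right hx.2.le
    rw [hIio x hx, lintegral_ofReal_eq_ofReal_sub_of_hasDerivAt hx.1.le (h.continuousOn.mono hsub)
      (fun t ht => h.hasDerivAt t (hsub' ht)) fun t ht => h.deriv_nonneg (hsub' ht)]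
    exact ENNReal.ofReal_le_ofReal (sub_le_self _ hua)
  · rw [hIoi t ht]
    exact h.mul_lintegral_le_flux hlam.le hua ht

theorem comp_neg (h : IsIncreasingSupersolution lam w u u' a b) :
    IsIncreasingSupersolution lam (fun x => w (-x)) (fun x => -u (-x)) (fun x => u' (-x))
      (-b) (-a) := by
  have hIcc : MapsTo (fun x : ℝ => -x) (Icc (-b) (-a)) (Icc a b) := fun x hx =>
    ⟨by linarith [hx.2], by linarith [hx.1]⟩
  have hIoo : MapsTo (fun x : ℝ => -x) (Ioo (-b) (-a)) (Ioo a b) := fun x hx =>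
    ⟨by linarith [hx.2], by linarith [hx.1]⟩
  refine ⟨h.continuousOn_weight.comp continuous_neg.continuousOn hIcc,
    fun x hx => h.weight_pos _ (hIcc hx),
    (h.continuousOn.comp continuous_neg.continuousOn hIcc).neg,
    fun x hx y hy hxy => neg_lt_neg (h.strictMonoOn (hIcc hy) (hIcc hx) (neg_lt_neg hxy)),
    fun x hx => ?_,
    fun x hx => differentiableAt_comp_neg.2 (h.differentiableAt_flux _ (hIoo hx)), fun x hx => ?_⟩
  · simpa [Function.comp_def]
      using ((h.hasDerivAt (-x) (hIoo hx)).comp x (hasDerivAt_neg x)).fun_neg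
  · rw [deriv_comp_neg (fun y => u' y * w y), neg_mul_neg, neg_sq]
    exact h.mul_deriv_flux_le (-x) (hIoo hx)

end IsIncreasingSupersolution

end Supersolutions

section HardyInequality

/-- The Hardy inequality `lam ∫ g² w ≤ ∫ g'² w` on `[a, b]` for Lipschitz functions vanishing at
`c`; for `c = a` it says that the first eigenvalue with Dirichlet condition at `a` and Neumann
condition at `b` is at least `lam`. Since `g` is Lipschitz, `deriv g` is the derivative of `g` off a
null set and its junk value `0` elsewhere is harmless. -/
def HardyInequality (lam : ℝ) (w : ℝ → ℝ) (c a b : ℝ) : Prop :=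
  ∀ (K : NNReal) (g : ℝ → ℝ), LipschitzOnWith K g (Icc a b) → g c = 0 →
    lam * ∫ x in a..b, g x ^ 2 * w x ≤ ∫ x in a..b, deriv g x ^ 2 * w x

variable {a b c lam : ℝ} {f u u' w : ℝ → ℝ} {K : NNReal}

theorem integrableOn_deriv_sq_mul_of_lipschitzOnWith (hf : LipschitzOnWith K f (Icc a b))
    (hw : IntegrableOn w (Icc a b)) : IntegrableOn (fun x => deriv f x ^ 2 * w x) (Icc a b) := by
  rw [integrableOn_Icc_iff_integrableOn_Ioo] at hw ⊢
  refine hw.bdd_mul (c := (K : ℝ) ^ 2) ((measurable_deriv f).pow_const 2).aestronglyMeasurable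
    (ae_restrict_of_forall_mem measurableSet_Ioo fun x hx => ?_)
  rw [norm_pow]
  gcongr
  exact norm_deriv_le_of_lipschitzOn (Icc_mem_nhds hx.1 hx.2) hf

theorem IsIncreasingSupersolution.hardyInequality_left
    (h : IsIncreasingSupersolution lam w u u' a b) (hlam : 0 < lam) (hab : a ≤ b) (hua : 0 ≤ u a) :
    HardyInequality lam w a a b := by
  intro K g hg hga
  have hw_nonneg : ∀ x ∈ Ioo a b, 0 ≤ w x := fun x hx =>
    (h.weight_pos x (Ioo_subset_Icc_self hx)).le
  have hint_sq : IntervalIntegrable (fun x => g x ^ 2 * w x) volume a b :=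
    ((hg.continuousOn.pow 2).mul h.continuousOn_weight).intervalIntegrable_of_Icc hab
  have hint_deriv : IntervalIntegrable (fun x => deriv g x ^ 2 * w x) volume a b :=
    (intervalIntegrable_iff_integrableOn_Icc_of_le hab).2
      (integrableOn_deriv_sq_mul_of_lipschitzOnWith hg h.continuousOn_weight.integrableOn_Icc)
  have hg_le : ∀ x ∈ Ioo a b, ‖g x‖ₑ ≤ ∫⁻ t in Ioo a x, ‖deriv g t‖ₑ := fun x hx => by
    have hac : AbsolutelyContinuousOnInterval g a x :=
      (hg.mono (uIcc_of_le hx.1.le ▸ Icc_subset_Icc_right hx.2.le)).absolutelyContinuousOnInterval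
    simpa only [hga, sub_zero] using enorm_sub_le_lintegral_enorm_deriv hx.1.le hac
  have hofReal (y z : ℝ) : ENNReal.ofReal (y ^ 2 * z) = ‖y‖ₑ ^ 2 * .ofReal z := by
    rw [ENNReal.ofReal_mul (sq_nonneg y), ← enorm_pow, Real.enorm_of_nonneg (sq_nonneg y)]
  have hderiv_nonneg : 0 ≤ ∫ x in a..b, deriv g x ^ 2 * w x :=
    intervalIntegral.integral_nonneg hab fun x hx => mul_nonneg (sq_nonneg _) (h.weight_pos x hx).le
  rw [← ENNReal.ofReal_le_ofReal_iff hderiv_nonneg, ENNReal.ofReal_mul hlam.le,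
    ofReal_intervalIntegral_eq_lintegral_Ioo hab hint_sq fun x hx =>
      mul_nonneg (sq_nonneg _) (hw_nonneg x hx),
    ofReal_intervalIntegral_eq_lintegral_Ioo hab hint_deriv fun x hx =>
      mul_nonneg (sq_nonneg _) (hw_nonneg x hx)]
  simp_rw [hofReal]
  calc ENNReal.ofReal lam * ∫⁻ x in Ioo a b, ‖g x‖ₑ ^ 2 * .ofReal (w x)
      ≤ ENNReal.ofReal lam
          * ∫⁻ x in Ioo a b, (∫⁻ t in Ioo a x, ‖deriv g t‖ₑ) ^ 2 * .ofReal (w x) := by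
        gcongr ENNReal.ofReal lam * ?_
        refine setLIntegral_mono' measurableSet_Ioo fun x hx => ?_
        gcongr
        exact hg_le x hx
    _ ≤ ∫⁻ t in Ioo a b, ‖deriv g t‖ₑ ^ 2 * .ofReal (w t) :=
        h.mul_lintegral_sq_le hlam hua (measurable_deriv g).enorm.aemeasurable

theorem HardyInequality.of_comp_neg (h : HardyInequality lam (fun x => w (-x)) (-c) (-b) (-a)) :
    HardyInequality lam w c a b := by
  intro K g hg hgc
  have hmaps : MapsTo (fun x : ℝ => -x) (Icc (-b) (-a)) (Icc a b) := fun x hx =>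
    ⟨by linarith [hx.2], by linarith [hx.1]⟩
  have hreflected := h _ (fun x => g (-x))
    (hg.comp LipschitzWith.id.neg.lipschitzOnWith hmaps) (by simpa using hgc)
  simp only [deriv_comp_neg, neg_sq] at hreflected
  rwa [intervalIntegral.integral_comp_neg (fun x => g x ^ 2 * w x),
    intervalIntegral.integral_comp_neg (fun x => deriv g x ^ 2 * w x), neg_neg, neg_neg]
    at hreflected

theorem IsIncreasingSupersolution.hardyInequality_right
    (h : IsIncreasingSupersolution lam w u u' a b) (hlam : 0 < lam) (hab : a ≤ b) (hub : u b ≤ 0) :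
    HardyInequality lam w b a b :=
  .of_comp_neg (h.comp_neg.hardyInequality_left hlam (neg_le_neg hab) (by simpa using hub))

theorem HardyInequality.append (hleft : HardyInequality lam w c a c)
    (hright : HardyInequality lam w c c b) (hac : a ≤ c) (hcb : c ≤ b)
    (hw : ContinuousOn w (Icc a b)) : HardyInequality lam w c a b := by
  intro K g hg hgc
  have hsub_left : Icc a c ⊆ Icc a b := Icc_subset_Icc_right hcb
  have hsub_right : Icc c b ⊆ Icc a b := Icc_subset_Icc_left hac
  have hsplit {F : ℝ → ℝ} (hF : IntegrableOn F (Icc a b)) :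
      ∫ x in a..b, F x = (∫ x in a..c, F x) + ∫ x in c..b, F x :=
    (intervalIntegral.integral_add_adjacent_intervals
      ((intervalIntegrable_iff_integrableOn_Icc_of_le hac).2 (hF.mono_set hsub_left))
      ((intervalIntegrable_iff_integrableOn_Icc_of_le hcb).2 (hF.mono_set hsub_right))).symm
  rw [hsplit ((hg.continuousOn.fun_pow 2).fun_mul hw).integrableOn_Icc,
    hsplit (integrableOn_deriv_sq_mul_of_lipschitzOnWith hg hw.integrableOn_Icc), mul_add]
  exact add_le_add (hleft K g (hg.mono hsub_left) hgc) (hright K g (hg.mono hsub_right) hgc)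

end HardyInequality

section PoincareConstant

theorem integral_sq_mul_le_integral_sub_const_sq_mul {α : Type*} [MeasurableSpace α]
    {μ : Measure α} {f w : α → ℝ} (c : ℝ) (hw : Integrable w μ)
    (hfw : Integrable (fun x => f x * w x) μ) (hfsqw : Integrable (fun x => f x ^ 2 * w x) μ)
    (hw_nonneg : 0 ≤ᵐ[μ] w) (hmean : ∫ x, f x * w x ∂μ = 0) :
    ∫ x, f x ^ 2 * w x ∂μ ≤ ∫ x, (f x - c) ^ 2 * w x ∂μ := by
  have hexpand : ∫ x, (f x - c) ^ 2 * w x ∂μ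
      = ∫ x, f x ^ 2 * w x ∂μ - 2 * c * ∫ x, f x * w x ∂μ + c ^ 2 * ∫ x, w x ∂μ := by
    rw [← integral_const_mul, ← integral_const_mul, ← integral_sub hfsqw (hfw.const_mul _),
      ← integral_add (hfsqw.sub' (hfw.const_mul _)) (hw.const_mul _)]
    exact integral_congr_ae (ae_of_all _ fun x => by ring)
  rw [hexpand, hmean, mul_zero, sub_zero]
  exact le_add_of_nonneg_right (mul_nonneg (sq_nonneg c) (integral_nonneg_of_ae hw_nonneg))

variable {a b c lam : ℝ} {f w : ℝ → ℝ} {K : NNReal} {I : Set ℝ}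

theorem LocLipschitzOn.exists_lipschitzOnWith (hf : LocLipschitzOn f I) (hI : IsCompact I) :
    ∃ K, LipschitzOnWith K f I := by
  refine LocallyLipschitzOn.exists_lipschitzOnWith_of_compact hI fun x hx => ?_
  obtain ⟨ε, hε, C, hC⟩ := hf x hx
  exact ⟨C, I ∩ Metric.ball x ε, inter_mem_nhdsWithin I (Metric.ball_mem_nhds x hε), hC⟩

theorem slopeOn_eq_abs_deriv {x : ℝ} (hI : I ∈ 𝓝 x) (hf : DifferentiableAt ℝ f x) :
    slopeOn f I x = |deriv f x| := by
  have hfilter : 𝓝[I \ {x}] x = 𝓝[≠] x := by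
    rw [sdiff_eq]
    exact nhdsWithin_inter_of_mem (mem_nhdsWithin_of_mem_nhds hI)
  rw [slopeOn, hfilter]
  refine Tendsto.limsup_eq ((hasDerivAt_iff_tendsto_slope.1 hf.hasDerivAt).abs.congr fun y => ?_)
  rw [slope_def_field, abs_div]

theorem setIntegral_slopeOn_sq_mul (w : ℝ → ℝ) (hf : LipschitzOnWith K f (Icc a b)) :
    ∫ x in Icc a b, slopeOn f (Icc a b) x ^ 2 * w x = ∫ x in Icc a b, deriv f x ^ 2 * w x := by
  rw [integral_Icc_eq_integral_Ioo, integral_Icc_eq_integral_Ioo]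
  refine setIntegral_congr_ae measurableSet_Ioo ?_
  filter_upwards [hf.ae_differentiableWithinAt_of_mem_real] with x hx hxI
  have hmem := Icc_mem_nhds hxI.1 hxI.2
  rw [slopeOn_eq_abs_deriv hmem ((hx (Ioo_subset_Icc_self hxI)).differentiableAt hmem), sq_abs]

theorem exists_locLipschitzOn_integral_mul_eq_zero (hab : a < b) (hw : ContinuousOn w (Icc a b))
    (hw_pos : ∀ x ∈ Icc a b, 0 < w x) :
    ∃ f, LocLipschitzOn f (Icc a b) ∧ ∫ x in Icc a b, f x * w x = 0 ∧
      0 < ∫ x in Icc a b, f x ^ 2 * w x ∧ IntegrableOn (fun x => f x ^ 2 * w x) (Icc a b) := by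
  have hintegral_pos {F : ℝ → ℝ} (hF : ContinuousOn F (Icc a b))
      (hF_nonneg : ∀ x ∈ Icc a b, 0 ≤ F x) (hF_pos : ∃ x ∈ Icc a b, 0 < F x) :
      0 < ∫ x in Icc a b, F x := by
    rw [integral_Icc_eq_integral_Ioc, ← intervalIntegral.integral_of_le hab.le]
    exact intervalIntegral.integral_pos hab hF
      (fun x hx => hF_nonneg x (Ioc_subset_Icc_self hx)) hF_pos
  have ha : a ∈ Icc a b := left_mem_Icc.2 hab.le
  have hb : b ∈ Icc a b := right_mem_Icc.2 hab.le
  have hmass : 0 < ∫ x in Icc a b, w x :=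
    hintegral_pos hw (fun x hx => (hw_pos x hx).le) ⟨a, ha, hw_pos a ha⟩
  set m := (∫ x in Icc a b, x * w x) / ∫ x in Icc a b, w x with hm
  have hcont : ContinuousOn (fun x => (x - m) ^ 2 * w x) (Icc a b) := by fun_prop
  refine ⟨fun x => x - m, fun x _ => ⟨1, one_pos, 1, ?_⟩, ?_, ?_, hcont.integrableOn_Icc⟩
  · exact (LipschitzWith.of_dist_le_mul fun y z => by simp).lipschitzOnWith
  · simp_rw [sub_mul]
    have hfirst_moment : ContinuousOn (fun x => x * w x) (Icc a b) := by fun_prop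
    rw [integral_sub hfirst_moment.integrableOn_Icc (hw.const_mul m).integrableOn_Icc,
      integral_const_mul, hm, div_mul_cancel₀ _ hmass.ne', sub_self]
  · refine hintegral_pos hcont (fun x hx => mul_nonneg (sq_nonneg _) (hw_pos x hx).le) ?_
    rcases eq_or_ne a m with ham | ham
    · exact ⟨b, hb, mul_pos (pow_pos (sub_pos.2 (ham ▸ hab)) 2) (hw_pos b hb)⟩
    · exact ⟨a, ha, mul_pos (sq_pos_of_ne_zero (sub_ne_zero.2 ham)) (hw_pos a ha)⟩

theorem HardyInequality.le_poincareConst (h : HardyInequality lam w c a b) (hlam : 0 ≤ lam)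
    (hab : a < b) (hw : ContinuousOn w (Icc a b)) (hw_pos : ∀ x ∈ Icc a b, 0 < w x) :
    lam ≤ poincareConst w (Icc a b) := by
  obtain ⟨f₀, hf₀_lip, hf₀_mean, hf₀_pos, hf₀_int⟩ :=
    exists_locLipschitzOn_integral_mul_eq_zero hab hw hw_pos
  refine le_csInf ⟨_, f₀, hf₀_lip, hf₀_mean, hf₀_pos, hf₀_int, rfl⟩ ?_
  rintro _ ⟨f, hf_lip, hf_mean, hf_pos, hf_int, rfl⟩
  obtain ⟨K, hf⟩ := hf_lip.exists_lipschitzOnWith isCompact_Icc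
  have hvariance := integral_sq_mul_le_integral_sub_const_sq_mul (f c) hw.integrableOn_Icc
    (hf.continuousOn.mul hw).integrableOn_Icc hf_int
    (ae_restrict_of_forall_mem measurableSet_Icc fun x hx => (hw_pos x hx).le) hf_mean
  have hHardy := h K (fun x => f x - f c)
    (fun x hx y hy => by simpa only [edist_sub_right] using hf hx hy) (sub_self _)
  simp only [deriv_sub_const_fun, intervalIntegral.integral_of_le hab.le,
    ← integral_Icc_eq_integral_Ioc] at hHardy
  rw [le_div_iff₀ hf_pos, setIntegral_slopeOn_sq_mul w hf]
  exact (mul_le_mul_of_nonneg_left hvariance hlam).trans hHardy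

theorem IsIncreasingSupersolution.le_poincareConst
    (hleft : IsIncreasingSupersolution lam w u u' a c)
    (hright : IsIncreasingSupersolution lam w u u' c b) (hlam : 0 < lam) (hac : a < c) (hcb : c < b)
    (huc : u c = 0) : lam ≤ poincareConst w (Icc a b) := by
  have hIcc : Icc a c ∪ Icc c b = Icc a b := Icc_union_Icc_eq_Icc hac.le hcb.le
  have hw : ContinuousOn w (Icc a b) := hIcc ▸ hleft.continuousOn_weight.union_of_isClosed
    hright.continuousOn_weight isClosed_Icc isClosed_Icc
  have hw_pos : ∀ x ∈ Icc a b, 0 < w x :=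
    hIcc ▸ fun x hx => hx.elim (hleft.weight_pos x) (hright.weight_pos x)
  exact ((hleft.hardyInequality_right hlam hac.le huc.le).append
    (hright.hardyInequality_left hlam hcb.le huc.ge) hac.le hcb.le hw).le_poincareConst
    hlam.le (hac.trans hcb) hw hw_pos

end PoincareConstant

section DriftComparison

variable {a b c lam : ℝ} {u u' u'' V V' β : ℝ → ℝ}

theorem isIncreasingSupersolution_exp (hV : ContinuousOn V (Icc a b))
    (hV' : ∀ x ∈ Ioo a b, HasDerivAt V (V' x) x) (hu : ContinuousOn u (Icc a b))
    (hmono : StrictMonoOn u (Icc a b)) (hu' : ∀ x ∈ Ioo a b, HasDerivAt u (u' x) x)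
    (hode : ∀ x ∈ Ioo a b, HasDerivAt u' (u'' x) x ∧ u'' x + β x * u' x = -(lam * u x))
    (hdrift : ∀ x ∈ Ioo a b, u x * (V' x - β x) ≤ 0) :
    IsIncreasingSupersolution lam (fun x => Real.exp (V x)) u u' a b := by
  have hflux : ∀ x ∈ Ioo a b, HasDerivAt (fun y => u' y * Real.exp (V y))
      (u'' x * Real.exp (V x) + u' x * (Real.exp (V x) * V' x)) x := fun x hx =>
    (hode x hx).1.fun_mul (hV' x hx).exp
  refine ⟨hV.rexp, fun x _ => Real.exp_pos _, hu, hmono, hu',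
    fun x hx => (hflux x hx).differentiableAt, fun x hx => ?_⟩
  have hu'_nonneg : 0 ≤ u' x := nonneg_of_hasDerivAt_of_monotoneOn hmono.monotoneOn
    (Icc_mem_nhds hx.1 hx.2) (hu' x hx)
  have hsource : u x * (u'' x + V' x * u' x) ≤ -(lam * u x ^ 2) := calc
    u x * (u'' x + V' x * u' x)
      = u x * (V' x - β x) * u' x + u x * (u'' x + β x * u' x) := by ring
    _ ≤ u x * (u'' x + β x * u' x) :=
      add_le_of_nonpos_left (mul_nonpos_of_nonpos_of_nonneg (hdrift x hx) hu'_nonneg)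
    _ = -(lam * u x ^ 2) := by rw [(hode x hx).2]; ring
  rw [(hflux x hx).deriv]
  linarith [mul_le_mul_of_nonneg_right hsource (Real.exp_pos (V x)).le]

theorem le_poincareConst_exp_of_strictMonoOn (hac : a < c) (hcb : c < b) (hlam : 0 < lam)
    (hu : ContinuousOn u (Icc a b)) (hmono : StrictMonoOn u (Icc a b)) (huc : u c = 0)
    (hu' : ∀ x ∈ Ioo a c ∪ Ioo c b, HasDerivAt u (u' x) x)
    (hode : ∀ x ∈ Ioo a c ∪ Ioo c b,
      HasDerivAt u' (u'' x) x ∧ u'' x + β x * u' x = -(lam * u x))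
    (hV : ContinuousOn V (Icc a b)) (hV' : ∀ x ∈ Ioo a c ∪ Ioo c b, HasDerivAt V (V' x) x)
    (hge : ∀ x ∈ Ioo a c, β x ≤ V' x) (hle : ∀ x ∈ Ioo c b, V' x ≤ β x) :
    lam ≤ poincareConst (fun x => Real.exp (V x)) (Icc a b) := by
  have hc : c ∈ Icc a b := ⟨hac.le, hcb.le⟩
  have hleft : Icc a c ⊆ Icc a b := Icc_subset_Icc_right hcb.le
  have hright : Icc c b ⊆ Icc a b := Icc_subset_Icc_left hac.le
  refine IsIncreasingSupersolution.le_poincareConst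
    (isIncreasingSupersolution_exp (hV.mono hleft) (fun x hx => hV' x (.inl hx)) (hu.mono hleft)
      (hmono.mono hleft) (fun x hx => hu' x (.inl hx)) (fun x hx => hode x (.inl hx))
      fun x hx => mul_nonpos_of_nonpos_of_nonneg ?_ (sub_nonneg.2 (hge x hx)))
    (isIncreasingSupersolution_exp (hV.mono hright) (fun x hx => hV' x (.inr hx)) (hu.mono hright)
      (hmono.mono hright) (fun x hx => hu' x (.inr hx)) (fun x hx => hode x (.inr hx))
      fun x hx => mul_nonpos_of_nonneg_of_nonpos ?_ (sub_nonpos.2 (hle x hx)))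
    hlam hac hcb huc
  · exact huc ▸ (hmono (hleft (Ioo_subset_Icc_self hx)) hc hx.2).le
  · exact huc ▸ (hmono hc (hright (Ioo_subset_Icc_self hx)) hx.1).le

theorem stmt_0_general (hac : a < c) (hcb : c < b) (hlam : 0 < lam)
    (hu : ContinuousOn u (Icc a b)) (hmono : StrictMonoOn u (Icc a b) ∨ StrictAntiOn u (Icc a b))
    (huc : u c = 0) (hu' : ∀ x ∈ Ioo a c ∪ Ioo c b, HasDerivAt u (u' x) x)
    (hode : ∀ x ∈ Ioo a c ∪ Ioo c b,
      HasDerivAt u' (u'' x) x ∧ u'' x + β x * u' x = -(lam * u x))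
    (hV : ContinuousOn V (Icc a b)) (hV' : ∀ x ∈ Ioo a c ∪ Ioo c b, HasDerivAt V (V' x) x)
    (hge : ∀ x ∈ Ioo a c, β x ≤ V' x) (hle : ∀ x ∈ Ioo c b, V' x ≤ β x) :
    lam ≤ poincareConst (fun x => Real.exp (V x)) (Icc a b) := by
  rcases hmono with hmono | hanti
  · exact le_poincareConst_exp_of_strictMonoOn hac hcb hlam hu hmono huc hu' hode hV hV' hge hle
  · exact le_poincareConst_exp_of_strictMonoOn (u := fun x => -u x) (u' := fun x => -u' x)
      (u'' := fun x => -u'' x) hac hcb hlam hu.neg hanti.neg (by rw [huc, neg_zero])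
      (fun x hx => (hu' x hx).fun_neg)
      (fun x hx => ⟨(hode x hx).1.fun_neg, by linarith [(hode x hx).2]⟩) hV hV' hge hle

end DriftComparison

end

/-- ODE comparison principle (Lemma 3.1). -/
theorem stmt_0 (a b : ℝ) (ha : a < 0) (hb : 0 < b)
    (V₀ V₀' : ℝ → ℝ)
    (hV₀cont : ContinuousOn V₀ (Set.Icc a b))
    (hV₀sm₁ : ContDiffOn ℝ (⊤ : ℕ∞) V₀ (Set.Icc a 0))
    (hV₀sm₂ : ContDiffOn ℝ (⊤ : ℕ∞) V₀ (Set.Icc 0 b))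
    (hV₀'₁ : ∀ x ∈ Set.Ico a 0, HasDerivWithinAt V₀ (V₀' x) (Set.Icc a 0) x)
    (hV₀'₂ : ∀ x ∈ Set.Ioc 0 b, HasDerivWithinAt V₀ (V₀' x) (Set.Icc 0 b) x)
    (lam₀ : ℝ) (hlam₀ : 0 < lam₀)
    (u₀ u₀' u₀'' : ℝ → ℝ)
    (hu₀C1 : ∀ x ∈ Set.Icc a b, HasDerivWithinAt u₀ (u₀' x) (Set.Icc a b) x)
    (hu₀'cont : ContinuousOn u₀' (Set.Icc a b))
    (hu₀mono : StrictMonoOn u₀ (Set.Icc a b) ∨ StrictAntiOn u₀ (Set.Icc a b))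
    (hu₀zero : u₀ 0 = 0)
    (hu₀'a : u₀' a = 0) (hu₀'b : u₀' b = 0)
    (hODE : ∀ x ∈ Set.Ioo a 0 ∪ Set.Ioo 0 b,
      HasDerivAt u₀' (u₀'' x) x ∧ u₀'' x + V₀' x * u₀' x = -(lam₀ * u₀ x))
    (hlam₀eq : lam₀ = poincareConst (fun x => Real.exp (V₀ x)) (Set.Icc a b))
    (V V' : ℝ → ℝ)
    (hVsm : ContDiffOn ℝ (⊤ : ℕ∞) V (Set.Icc a b))
    (hV' : ∀ x ∈ Set.Icc a b, HasDerivWithinAt V (V' x) (Set.Icc a b) x)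
    (hge : ∀ x ∈ Set.Ico a 0, V₀' x ≤ V' x)
    (hle : ∀ x ∈ Set.Ioc 0 b, V' x ≤ V₀' x) :
    lam₀ ≤ poincareConst (fun x => Real.exp (V x)) (Set.Icc a b) := by
  have h0 : (0 : ℝ) ∈ Set.Icc a b := ⟨ha.le, hb.le⟩
  exact stmt_0_general ha hb hlam₀ (fun x hx => (hu₀C1 x hx).continuousWithinAt) hu₀mono hu₀zero
    (hasDerivAt_Ioo_union_Ioo_of_hasDerivWithinAt_Icc h0 hu₀C1) hODE hVsm.continuousOn
    (hasDerivAt_Ioo_union_Ioo_of_hasDerivWithinAt_Icc h0 hV')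
    (fun x hx => hge x (Set.Ioo_subset_Ico_self hx)) fun x hx => hle x (Set.Ioo_subset_Ioc_self hx)
end

section
/- Let K ∈ ℝ, N ∈ (1,∞), and let h be an MCP(K,N) density whose support has diameter exactly D ∈ (0,∞). Then λ[h] ≥ λ[h_{K,N,D}]. -/
open MeasureTheory Filter

/-!
Let `[m - c, m + c]` be the support of `h`, with `c = D / 2`. The `MCP` condition, read from the
far endpoint (Bishop–Gromov), says that `h / h_{K,N,D}` decreases as one moves away from the
midpoint, on each half. On its half-interval the model satisfies the inequality
`λ ∫ f² w ≤ ∫ f'² w` for all `f` vanishing at the midpoint, since the odd reflection of such an `f`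
is a mean-zero test function for the symmetric model. Truncating `f` gives the same inequality on
every initial segment, and hence (Hardy's lemma: write the decreasing ratio as a superposition of
indicators of initial segments) with `w` replaced by `h`. Apply this to `f - f m` on both halves and
add up; for mean-zero `f`, subtracting a constant only increases `∫ f² h`.
-/

open Set Topology

/-! ### Locally Lipschitz functions -/

lemma locLipschitzOn_iff_locallyLipschitzOn {f : ℝ → ℝ} {I : Set ℝ} :
    LocLipschitzOn f I ↔ LocallyLipschitzOn I f := by
  refine forall₂_congr fun x _ => ⟨?_, ?_⟩
  · rintro ⟨ε, hε, C, hC⟩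
    exact ⟨C, _, inter_mem_nhdsWithin I (Metric.ball_mem_nhds x hε), hC⟩
  · rintro ⟨C, t, ht, hC⟩
    obtain ⟨ε, hε, hsub⟩ := Metric.mem_nhdsWithin_iff.1 ht
    exact ⟨ε, hε, C, hC.mono (inter_comm I _ ▸ hsub)⟩

lemma ae_differentiableAt_of_locallyLipschitz {E F : Type*}
    [NormedAddCommGroup E] [NormedSpace ℝ E] [FiniteDimensional ℝ E] [MeasurableSpace E]
    [BorelSpace E] [NormedAddCommGroup F] [NormedSpace ℝ F] [FiniteDimensional ℝ F]
    {μ : Measure E} [μ.IsAddHaarMeasure] {f : E → F} (hf : LocallyLipschitz f) :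
    ∀ᵐ x ∂μ, DifferentiableAt ℝ f x := by
  have : ProperSpace E := FiniteDimensional.proper_real E
  refine measure_null_of_locally_null _ fun x _ => ?_
  obtain ⟨C, t, ht, hC⟩ := hf x
  have hdiff := (hC.mono interior_subset).ae_differentiableWithinAt_of_mem (μ := μ)
  refine ⟨{y | ¬ DifferentiableAt ℝ f y} ∩ interior t,
    inter_mem self_mem_nhdsWithin (mem_nhdsWithin_of_mem_nhds (interior_mem_nhds.2 ht)),
    measure_mono_null ?_ hdiff⟩
  rintro y ⟨hy, hyt⟩ hcon
  exact hy ((hcon hyt).differentiableAt (isOpen_interior.mem_nhds hyt))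

lemma exists_norm_deriv_le_of_isCompact {F : Type*} [NormedAddCommGroup F] [NormedSpace ℝ F]
    {f : ℝ → F} (hf : LocallyLipschitz f) {K : Set ℝ} (hK : IsCompact K) :
    ∃ C, ∀ x ∈ K, ‖deriv f x‖ ≤ C := by
  obtain ⟨C, hC⟩ :=
    hf.locallyLipschitzOn.exists_lipschitzOnWith_of_compact (hK.cthickening (r := 1))
  exact ⟨C, fun x hx => norm_deriv_le_of_lipschitzOn
    (mem_nhdsSet_iff_forall.1 (Metric.cthickening_mem_nhdsSet K one_pos) x hx) hC⟩

lemma integrableOn_deriv_sq_mul {μ : Measure ℝ} {f h : ℝ → ℝ} {K : Set ℝ}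
    (hf : LocallyLipschitz f) (hK : IsCompact K) (hh : IntegrableOn h K μ) :
    IntegrableOn (fun x => deriv f x ^ 2 * h x) K μ := by
  obtain ⟨C, hC⟩ := exists_norm_deriv_le_of_isCompact hf hK
  refine hh.bdd_mul (c := C ^ 2) ((measurable_deriv f).pow_const 2).aestronglyMeasurable
    ((ae_restrict_mem hK.measurableSet).mono fun x hx => ?_)
  rw [norm_pow]
  exact pow_le_pow_left₀ (norm_nonneg _) (hC x hx) 2

lemma intervalIntegrable_deriv_sq_mul {f h : ℝ → ℝ} {a b : ℝ}
    (hf : LocallyLipschitz f) (hh : IntervalIntegrable h volume a b) :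
    IntervalIntegrable (fun x => deriv f x ^ 2 * h x) volume a b := by
  rw [intervalIntegrable_iff'] at hh ⊢
  exact integrableOn_deriv_sq_mul hf isCompact_uIcc hh

/-! ### The Poincaré constant -/

lemma slopeOn_eq_abs_of_hasDerivWithinAt {f : ℝ → ℝ} {f' x : ℝ} {I : Set ℝ}
    [(𝓝[I \ {x}] x).NeBot] (hf : HasDerivWithinAt f f' I x) : slopeOn f I x = |f'| := by
  refine ((hasDerivWithinAt_iff_tendsto_slope.1 hf).abs.congr fun y => ?_).limsup_eq
  rw [slope_def_field, abs_div]

lemma integral_slopeOn_univ_sq_mul {f : ℝ → ℝ} (hf : LocallyLipschitz f) (h : ℝ → ℝ) :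
    ∫ x, slopeOn f univ x ^ 2 * h x = ∫ x, deriv f x ^ 2 * h x := by
  refine integral_congr_ae ?_
  filter_upwards [ae_differentiableAt_of_locallyLipschitz hf] with x hx
  have : (𝓝[univ \ {x}] x).NeBot := by rw [← compl_eq_univ_sdiff]; infer_instance
  rw [slopeOn_eq_abs_of_hasDerivWithinAt hx.hasDerivAt.hasDerivWithinAt, sq_abs]

section PoincareConst

variable {h f : ℝ → ℝ} {I : Set ℝ}

lemma integral_sq_mul_nonneg (h0 : 0 ≤ᵐ[volume.restrict I] h) (φ : ℝ → ℝ) :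
    0 ≤ ∫ x in I, φ x ^ 2 * h x :=
  integral_nonneg_of_ae (h0.mono fun _ hx => mul_nonneg (sq_nonneg _) hx)

lemma poincareConst_nonneg (h0 : 0 ≤ᵐ[volume.restrict I] h) : 0 ≤ poincareConst h I := by
  refine Real.sInf_nonneg ?_
  rintro r ⟨g, -, -, hg, -, rfl⟩
  exact div_nonneg (integral_sq_mul_nonneg h0 _) hg.le

lemma poincareConst_mul_integral_sq_le (h0 : 0 ≤ᵐ[volume.restrict I] h)
    (hf : LocLipschitzOn f I) (hmean : ∫ x in I, f x * h x = 0) :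
    poincareConst h I * ∫ x in I, f x ^ 2 * h x ≤ ∫ x in I, slopeOn f I x ^ 2 * h x := by
  rcases (integral_sq_mul_nonneg h0 f).eq_or_lt with hzero | hpos
  · rw [← hzero, mul_zero]
    exact integral_sq_mul_nonneg h0 _
  · rw [← le_div_iff₀ hpos]
    refine csInf_le ⟨0, ?_⟩ ⟨f, hf, hmean, hpos, not_imp_comm.1 integral_undef hpos.ne', rfl⟩
    rintro r ⟨g, -, -, hg, -, rfl⟩
    exact div_nonneg (integral_sq_mul_nonneg h0 _) hg.le

lemma poincareConst_univ_mul_integral_sq_le (h0 : 0 ≤ᵐ[volume] h) (hf : LocallyLipschitz f)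
    (hmean : ∫ x, f x * h x = 0) :
    poincareConst h univ * ∫ x, f x ^ 2 * h x ≤ ∫ x, deriv f x ^ 2 * h x := by
  have := poincareConst_mul_integral_sq_le (h := h) (I := univ) (by rwa [Measure.restrict_univ])
    (locLipschitzOn_iff_locallyLipschitzOn.2 hf.locallyLipschitzOn) (by rwa [setIntegral_univ])
  simpa only [setIntegral_univ, integral_slopeOn_univ_sq_mul hf] using this

lemma le_poincareConst_univ {L : ℝ}
    (hne : ∃ f, LocallyLipschitz f ∧ ∫ x, f x * h x = 0 ∧ 0 < ∫ x, f x ^ 2 * h x)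
    (hL : ∀ f, LocallyLipschitz f → ∫ x, f x * h x = 0 →
      L * ∫ x, f x ^ 2 * h x ≤ ∫ x, deriv f x ^ 2 * h x) :
    L ≤ poincareConst h univ := by
  simp only [poincareConst, setIntegral_univ, integrableOn_univ,
    locLipschitzOn_iff_locallyLipschitzOn, locallyLipschitzOn_univ]
  refine le_csInf ?_ ?_
  · obtain ⟨f, hf, hmean, hpos⟩ := hne
    exact ⟨_, f, hf, hmean, hpos, not_imp_comm.1 integral_undef hpos.ne', rfl⟩
  · rintro r ⟨f, hf, hmean, hpos, -, rfl⟩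
    rw [le_div_iff₀ hpos, integral_slopeOn_univ_sq_mul hf]
    exact hL f hf hmean

end PoincareConst

/-! ### Hardy's lemma -/

-- Each superlevel set of `ρ` is an initial segment of `(a, b)`; integrate over the levels.
lemma lintegral_Ioo_le_of_antitoneOn {α : Type*} [ConditionallyCompleteLinearOrder α]
    [TopologicalSpace α] [OrderTopology α] [SecondCountableTopology α] [MeasurableSpace α]
    [BorelSpace α] {μ ν : Measure α} [NullSingletonClass μ] {a b : α} {ρ : α → ℝ}
    (hμν : ∀ t ∈ Ioc a b, μ (Ioo a t) ≤ ν (Ioo a t))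
    (hρ0 : ∀ x ∈ Ioo a b, 0 ≤ ρ x) (hρ : AntitoneOn ρ (Ioo a b)) :
    ∫⁻ x in Ioo a b, ENNReal.ofReal (ρ x) ∂μ ≤ ∫⁻ x in Ioo a b, ENNReal.ofReal (ρ x) ∂ν := by
  have layer_cake (κ : Measure α) : ∫⁻ x in Ioo a b, ENNReal.ofReal (ρ x) ∂κ =
      ∫⁻ u in Ioi (0 : ℝ), κ ({x | u < ρ x} ∩ Ioo a b) := by
    rw [lintegral_eq_lintegral_meas_lt _ ((ae_restrict_mem measurableSet_Ioo).mono hρ0)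
      (aemeasurable_restrict_of_antitoneOn measurableSet_Ioo hρ)]
    simp_rw [Measure.restrict_apply' measurableSet_Ioo]
  rw [layer_cake, layer_cake]
  refine lintegral_mono fun u => ?_
  set B := {x | u < ρ x} ∩ Ioo a b
  rcases B.eq_empty_or_nonempty with hB | ⟨x₀, hx₀⟩
  · simp [hB]
  have hbdd : BddAbove B := ⟨b, fun x hx => hx.2.2.le⟩
  have hsup : sSup B ∈ Ioc a b :=
    ⟨hx₀.2.1.trans_le (le_csSup hbdd hx₀), csSup_le ⟨x₀, hx₀⟩ fun x hx => hx.2.2.le⟩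
  have hIoo : Ioo a (sSup B) ⊆ B := by
    intro x hx
    obtain ⟨y, hy, hxy⟩ := exists_lt_of_lt_csSup ⟨x₀, hx₀⟩ hx.2
    have hxab : x ∈ Ioo a b := ⟨hx.1, hx.2.trans_le hsup.2⟩
    exact ⟨hy.1.trans_le (hρ hxab hy.2 hxy.le), hxab⟩
  have hIoc : B ⊆ Ioc a (sSup B) := fun x hx => ⟨hx.2.1, le_csSup hbdd hx⟩
  calc μ B ≤ μ (Ioc a (sSup B)) := measure_mono hIoc
    _ = μ (Ioo a (sSup B)) := measure_congr Ioo_ae_eq_Ioc.symm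
    _ ≤ ν (Ioo a (sSup B)) := hμν _ hsup
    _ ≤ ν B := measure_mono hIoo

lemma ofReal_intervalIntegral_eq_setLIntegral_Ioo {f : ℝ → ℝ} {a b : ℝ} (hab : a ≤ b)
    (hf : IntervalIntegrable f volume a b) (hf0 : ∀ x ∈ Ioo a b, 0 ≤ f x) :
    ENNReal.ofReal (∫ x in a..b, f x) = ∫⁻ x in Ioo a b, ENNReal.ofReal (f x) := by
  rw [intervalIntegral.integral_of_le hab, integral_Ioc_eq_integral_Ioo]
  exact ofReal_integral_eq_lintegral_ofReal
    ((intervalIntegrable_iff_integrableOn_Ioo_of_le hab).1 hf)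
    ((ae_restrict_mem measurableSet_Ioo).mono hf0)

lemma withDensity_ofReal_Ioo {w : ℝ → ℝ} {a b : ℝ} (hab : a ≤ b)
    (hw : IntervalIntegrable w volume a b) (hw0 : ∀ x ∈ Ioo a b, 0 ≤ w x) :
    volume.withDensity (fun x => ENNReal.ofReal (w x)) (Ioo a b) =
      ENNReal.ofReal (∫ x in a..b, w x) := by
  rw [withDensity_apply _ measurableSet_Ioo,
    ofReal_intervalIntegral_eq_setLIntegral_Ioo hab hw hw0]

lemma setLIntegral_Ioo_withDensity_ofReal {ρ w : ℝ → ℝ} {a b : ℝ} (hab : a ≤ b)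
    (hw : IntervalIntegrable w volume a b) (hw0 : ∀ x ∈ Ioo a b, 0 ≤ w x)
    (hρ : AEMeasurable ρ (volume.restrict (Ioo a b))) (hρ0 : ∀ x ∈ Ioo a b, 0 ≤ ρ x)
    (hρw : IntervalIntegrable (fun x => ρ x * w x) volume a b) :
    ∫⁻ x in Ioo a b, ENNReal.ofReal (ρ x) ∂volume.withDensity (fun x => ENNReal.ofReal (w x)) =
      ENNReal.ofReal (∫ x in a..b, ρ x * w x) := by
  have hwm := ((intervalIntegrable_iff_integrableOn_Ioo_of_le hab).1 hw).aemeasurable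
  rw [restrict_withDensity measurableSet_Ioo, lintegral_withDensity_eq_lintegral_mul₀
    hwm.ennreal_ofReal hρ.ennreal_ofReal, ofReal_intervalIntegral_eq_setLIntegral_Ioo hab hρw
      fun x hx => mul_nonneg (hρ0 x hx) (hw0 x hx)]
  refine setLIntegral_congr_fun measurableSet_Ioo fun x hx => ?_
  rw [ENNReal.ofReal_mul (hρ0 x hx), mul_comm, Pi.mul_apply]

theorem intervalIntegral_mul_le_of_antitoneOn {a b : ℝ} {u v ρ : ℝ → ℝ} (hab : a ≤ b)
    (hu : IntervalIntegrable u volume a b) (hu0 : ∀ x ∈ Ioo a b, 0 ≤ u x)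
    (hv : IntervalIntegrable v volume a b) (hv0 : ∀ x ∈ Ioo a b, 0 ≤ v x)
    (huv : ∀ t ∈ Ioc a b, ∫ x in a..t, u x ≤ ∫ x in a..t, v x)
    (hρ0 : ∀ x ∈ Ioo a b, 0 ≤ ρ x) (hρ : AntitoneOn ρ (Ioo a b))
    (hρu : IntervalIntegrable (fun x => ρ x * u x) volume a b)
    (hρv : IntervalIntegrable (fun x => ρ x * v x) volume a b) :
    ∫ x in a..b, ρ x * u x ≤ ∫ x in a..b, ρ x * v x := by
  set μ := volume.withDensity fun x => ENNReal.ofReal (u x) with hμ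
  set ν := volume.withDensity fun x => ENNReal.ofReal (v x) with hν
  have : NullSingletonClass μ :=
    ⟨fun x => withDensity_absolutelyContinuous _ _ (measure_singleton x)⟩
  have hμν : ∀ t ∈ Ioc a b, μ (Ioo a t) ≤ ν (Ioo a t) := by
    intro t ht
    have hsub : uIcc a t ⊆ uIcc a b := uIcc_subset_uIcc_left (mem_uIcc_of_le ht.1.le ht.2)
    have hIoo : Ioo a t ⊆ Ioo a b := Ioo_subset_Ioo_right ht.2
    rw [hμ, hν, withDensity_ofReal_Ioo ht.1.le (hu.mono_set hsub) fun x hx => hu0 x (hIoo hx),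
      withDensity_ofReal_Ioo ht.1.le (hv.mono_set hsub) fun x hx => hv0 x (hIoo hx)]
    exact ENNReal.ofReal_le_ofReal (huv t ht)
  have key := lintegral_Ioo_le_of_antitoneOn hμν hρ0 hρ
  have hρm := aemeasurable_restrict_of_antitoneOn (μ := volume) measurableSet_Ioo hρ
  rw [setLIntegral_Ioo_withDensity_ofReal hab hu hu0 hρm hρ0 hρu,
    setLIntegral_Ioo_withDensity_ofReal hab hv hv0 hρm hρ0 hρv] at key
  refine (ENNReal.ofReal_le_ofReal_iff ?_).1 key
  rw [intervalIntegral.integral_of_le hab, integral_Ioc_eq_integral_Ioo]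
  exact setIntegral_nonneg measurableSet_Ioo fun x hx => mul_nonneg (hρ0 x hx) (hv0 x hx)

/-! ### Mixed Dirichlet–Neumann inequalities -/

/-- The inequality `L ∫ f² G ≤ ∫ f'² G` on `(0, c)` for the weight `G`, with a Dirichlet condition
at `0` and a free endpoint at `c`. -/
def DirichletNeumannBound (L c : ℝ) (G : ℝ → ℝ) : Prop :=
  ∀ f : ℝ → ℝ, LocallyLipschitz f → f 0 = 0 →
    L * ∫ s in 0..c, f s ^ 2 * G s ≤ ∫ s in 0..c, deriv f s ^ 2 * G s

lemma intervalIntegrable_sq_mul {μ : Measure ℝ} {f h : ℝ → ℝ} {a b : ℝ} (hf : Continuous f)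
    (hh : IntervalIntegrable h μ a b) : IntervalIntegrable (fun x => f x ^ 2 * h x) μ a b :=
  hh.continuousOn_mul (hf.pow 2).continuousOn

lemma deriv_comp_min_of_lt {F : Type*} [NormedAddCommGroup F] [NormedSpace ℝ F] (f : ℝ → F)
    {s t : ℝ} (hs : s < t) : deriv (fun s => f (min s t)) s = deriv f s :=
  EventuallyEq.deriv_eq <| by
    filter_upwards [Iio_mem_nhds hs] with y hy using congrArg f (min_eq_left (mem_Iio.1 hy).le)

lemma deriv_comp_min_of_gt {F : Type*} [NormedAddCommGroup F] [NormedSpace ℝ F] (f : ℝ → F)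
    {s t : ℝ} (hs : t < s) : deriv (fun s => f (min s t)) s = 0 := by
  have : (fun s => f (min s t)) =ᶠ[𝓝 s] fun _ => f t := by
    filter_upwards [Ioi_mem_nhds hs] with y hy using congrArg f (min_eq_right (mem_Ioi.1 hy).le)
  rw [this.deriv_eq, deriv_const]

namespace DirichletNeumannBound

variable {L c : ℝ} {G : ℝ → ℝ}

-- Test with `f (min s t)`, which has no energy beyond `t`.
lemma mono_right (hGL : DirichletNeumannBound L c G) (hL : 0 ≤ L)
    (hG : IntervalIntegrable G volume 0 c) (hG0 : ∀ s ∈ Ioo 0 c, 0 ≤ G s)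
    {t : ℝ} (ht : t ∈ Icc 0 c) : DirichletNeumannBound L t G := by
  intro f hf hf0
  set g : ℝ → ℝ := fun s => f (min s t)
  have hg : LocallyLipschitz g := hf.comp (LocallyLipschitz.id.min_const t)
  have hg0 : g 0 = 0 := by simp [g, ht.1, hf0]
  have hG_left : IntervalIntegrable G volume 0 t :=
    hG.mono_set (uIcc_subset_uIcc_left (mem_uIcc_of_le ht.1 ht.2))
  have hG_right : IntervalIntegrable G volume t c :=
    hG.mono_set (uIcc_subset_uIcc_right (mem_uIcc_of_le ht.1 ht.2))
  calc L * ∫ s in 0..t, f s ^ 2 * G s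
      = L * ∫ s in 0..t, g s ^ 2 * G s := by
        congr 1
        refine intervalIntegral.integral_congr_Ioo_of_le ht.1 fun s hs => ?_
        simp only [g, min_eq_left hs.2.le]
    _ ≤ L * ∫ s in 0..c, g s ^ 2 * G s := by
        rw [← intervalIntegral.integral_add_adjacent_intervals
          (intervalIntegrable_sq_mul hg.continuous hG_left)
          (intervalIntegrable_sq_mul hg.continuous hG_right)]
        refine mul_le_mul_of_nonneg_left (le_add_of_nonneg_right ?_) hL
        rw [intervalIntegral.integral_of_le ht.2, integral_Ioc_eq_integral_Ioo]
        exact setIntegral_nonneg measurableSet_Ioo fun s hs =>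
          mul_nonneg (sq_nonneg _) (hG0 s ⟨ht.1.trans_lt hs.1, hs.2⟩)
    _ ≤ ∫ s in 0..c, deriv g s ^ 2 * G s := hGL g hg hg0
    _ = ∫ s in 0..t, deriv f s ^ 2 * G s := by
        rw [← intervalIntegral.integral_add_adjacent_intervals
          (intervalIntegrable_deriv_sq_mul hg hG_left)
          (intervalIntegrable_deriv_sq_mul hg hG_right),
          intervalIntegral.integral_congr_Ioo_of_le
            (g := fun s => deriv f s ^ 2 * G s) ht.1
            (fun s hs => by simp only [g, deriv_comp_min_of_lt f hs.2]),
          intervalIntegral.integral_congr_Ioo_of_le (g := fun _ => 0) ht.2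
            (fun s hs => by simp only [g, deriv_comp_min_of_gt f hs.1]; ring),
          intervalIntegral.integral_zero, add_zero]

theorem of_antitoneOn_div {k : ℝ → ℝ} (hGL : DirichletNeumannBound L c G)
    (hL : 0 ≤ L) (hc : 0 ≤ c) (hG : IntervalIntegrable G volume 0 c) (hG0 : ∀ s ∈ Ioo 0 c, 0 < G s)
    (hk : IntervalIntegrable k volume 0 c) (hk0 : ∀ s ∈ Ioo 0 c, 0 ≤ k s)
    (hkG : AntitoneOn (fun s => k s / G s) (Ioo 0 c)) : DirichletNeumannBound L c k := by
  intro f hf hf0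
  have hG0' : ∀ s ∈ Ioo 0 c, 0 ≤ G s := fun s hs => (hG0 s hs).le
  have hcongr (φ : ℝ → ℝ) : EqOn (fun s => φ s * k s) (fun s => k s / G s * (φ s * G s))
      (Ioo 0 c) := by
    intro s hs
    have := (hG0 s hs).ne'
    field_simp
  have hcongr' (φ : ℝ → ℝ) (hφ : IntervalIntegrable (fun s => φ s * k s) volume 0 c) :
      IntervalIntegrable (fun s => k s / G s * (φ s * G s)) volume 0 c := by
    rw [intervalIntegrable_iff_integrableOn_Ioo_of_le hc] at hφ ⊢
    exact hφ.congr_fun (hcongr φ) measurableSet_Ioo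
  have := intervalIntegral_mul_le_of_antitoneOn hc
    (u := fun s => L * f s ^ 2 * G s) (v := fun s => deriv f s ^ 2 * G s)
    (by simpa only [mul_assoc] using (intervalIntegrable_sq_mul hf.continuous hG).const_mul L)
    (fun s hs => mul_nonneg (mul_nonneg hL (sq_nonneg _)) (hG0' s hs))
    (intervalIntegrable_deriv_sq_mul hf hG)
    (fun s hs => mul_nonneg (sq_nonneg _) (hG0' s hs))
    (fun t ht => by
      simpa only [mul_assoc, intervalIntegral.integral_const_mul] using
        hGL.mono_right hL hG hG0' (Ioc_subset_Icc_self ht) f hf hf0)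
    (fun s hs => div_nonneg (hk0 s hs) (hG0' s hs)) hkG
    (hcongr' (fun s => L * f s ^ 2) (by
      simpa only [mul_assoc] using (intervalIntegrable_sq_mul hf.continuous hk).const_mul L))
    (hcongr' (fun s => deriv f s ^ 2) (intervalIntegrable_deriv_sq_mul hf hk))
  rw [← intervalIntegral.integral_congr_Ioo_of_le hc (hcongr fun s => L * f s ^ 2),
    ← intervalIntegral.integral_congr_Ioo_of_le hc (hcongr fun s => deriv f s ^ 2)] at this
  simpa only [mul_assoc, intervalIntegral.integral_const_mul] using this

end DirichletNeumannBound

/-! ### Weights on an interval -/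

/-- A nonnegative integrable density carried by `[a, b]`. -/
structure IsWeightOn (h : ℝ → ℝ) (a b : ℝ) : Prop where
  nonneg : 0 ≤ h
  integrable : Integrable h
  ae_eq_zero : ∀ᵐ x, x ∉ Icc a b → h x = 0

namespace IsWeightOn

variable {h : ℝ → ℝ} {a b : ℝ}

lemma ae_mul_eq_zero (hw : IsWeightOn h a b) (φ : ℝ → ℝ) :
    ∀ᵐ x, x ∉ Icc a b → φ x * h x = 0 :=
  hw.ae_eq_zero.mono fun _ hx hxI => mul_eq_zero_of_right _ (hx hxI)

lemma integrable_mul (hw : IsWeightOn h a b) {φ : ℝ → ℝ} (hφ : Continuous φ) :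
    Integrable fun x => φ x * h x :=
  (hw.integrable.integrableOn.continuousOn_mul hφ.continuousOn
    isCompact_Icc).integrable_of_ae_notMem_eq_zero (hw.ae_mul_eq_zero φ)

lemma integrable_deriv_sq_mul (hw : IsWeightOn h a b) {f : ℝ → ℝ} (hf : LocallyLipschitz f) :
    Integrable fun x => deriv f x ^ 2 * h x :=
  (integrableOn_deriv_sq_mul hf isCompact_Icc
    hw.integrable.integrableOn).integrable_of_ae_notMem_eq_zero (hw.ae_mul_eq_zero _)

lemma exists_mean_zero (hw : IsWeightOn h a b) (hh : ¬ h =ᵐ[volume] 0) :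
    ∃ f, LocallyLipschitz f ∧ ∫ x, f x * h x = 0 ∧ 0 < ∫ x, f x ^ 2 * h x := by
  have hmass : 0 < ∫ x, h x := by
    refine (integral_nonneg hw.nonneg).lt_of_ne fun h0 => hh ?_
    exact (integral_eq_zero_iff_of_nonneg hw.nonneg hw.integrable).1 h0.symm
  set p := (∫ x, x * h x) / ∫ x, h x with hp
  refine ⟨fun x => x - p, LocallyLipschitz.id.sub (LocallyLipschitz.const p), ?_, ?_⟩
  · simp_rw [sub_mul]
    rw [integral_sub (hw.integrable_mul (φ := fun x => x) continuous_id)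
        (hw.integrable.const_mul p), integral_const_mul, hp, div_mul_cancel₀ _ hmass.ne']
    exact sub_self _
  · have hsq0 : 0 ≤ fun x => (x - p) ^ 2 * h x :=
      fun x => mul_nonneg (sq_nonneg _) (hw.nonneg x)
    refine (integral_nonneg hsq0).lt_of_ne fun h0 => hh ?_
    filter_upwards [(integral_eq_zero_iff_of_nonneg hsq0
      (hw.integrable_mul (φ := fun x => (x - p) ^ 2) (by fun_prop))).1 h0.symm,
      Measure.ae_ne volume p] with x hx hxp
    exact (mul_eq_zero.1 hx).resolve_left (pow_ne_zero 2 (sub_ne_zero.2 hxp))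

end IsWeightOn

lemma integral_eq_add_halves {E : Type*} [NormedAddCommGroup E] [NormedSpace ℝ E] {g : ℝ → E}
    {m c : ℝ} (hg : Integrable g) (hc : 0 ≤ c)
    (hg0 : ∀ᵐ x, x ∉ Icc (m - c) (m + c) → g x = 0) :
    ∫ x, g x = (∫ s in 0..c, g (m - s)) + ∫ s in 0..c, g (m + s) := by
  rw [intervalIntegral.integral_comp_sub_left, intervalIntegral.integral_comp_add_left,
    sub_zero, add_zero, intervalIntegral.integral_add_adjacent_intervals
      hg.intervalIntegrable hg.intervalIntegrable,
    intervalIntegral.integral_of_le (by linarith), ← integral_Icc_eq_integral_Ioc,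
    setIntegral_eq_integral_of_ae_compl_eq_zero hg0]

/-! ### Odd reflection -/

/-- The odd function that agrees with `f - f 0` on `[0, ∞)`. -/
def oddExtension (f : ℝ → ℝ) (s : ℝ) : ℝ :=
  f (max s 0) - f (max (-s) 0)

section OddExtension

variable {f : ℝ → ℝ}

lemma locallyLipschitz_oddExtension (hf : LocallyLipschitz f) :
    LocallyLipschitz (oddExtension f) :=
  (hf.comp (LocallyLipschitz.id.max_const 0)).sub
    (hf.comp (LocallyLipschitz.id.neg.max_const 0))

lemma oddExtension_neg (f : ℝ → ℝ) (s : ℝ) : oddExtension f (-s) = -oddExtension f s := by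
  simp [oddExtension]

lemma oddExtension_of_nonneg (f : ℝ → ℝ) {s : ℝ} (hs : 0 ≤ s) :
    oddExtension f s = f s - f 0 := by
  simp [oddExtension, hs]

lemma deriv_oddExtension_neg (f : ℝ → ℝ) (s : ℝ) :
    deriv (oddExtension f) (-s) = deriv (oddExtension f) s := by
  have hodd : (fun x => oddExtension f (-x)) = fun x => -oddExtension f x :=
    funext (oddExtension_neg f)
  have := deriv_comp_neg (oddExtension f) s
  rw [hodd, deriv.fun_neg] at this
  exact (neg_injective this).symm

lemma deriv_oddExtension_of_pos (f : ℝ → ℝ) {s : ℝ} (hs : 0 < s) :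
    deriv (oddExtension f) s = deriv f s := by
  have : oddExtension f =ᶠ[𝓝 s] fun y => f y - f 0 := by
    filter_upwards [Ioi_mem_nhds hs] with y hy using oddExtension_of_nonneg f (mem_Ioi.1 hy).le
  rw [this.deriv_eq, deriv_sub_const]

end OddExtension

namespace IsWeightOn

variable {w : ℝ → ℝ} {n c : ℝ}

lemma integral_mul_of_even (hw : IsWeightOn w (n - c) (n + c)) (hc : 0 ≤ c)
    (hsymm : ∀ s, w (n - s) = w (n + s)) {φ : ℝ → ℝ} (hφ : ∀ s, φ (n - s) = φ (n + s))
    (hint : Integrable fun x => φ x * w x) :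
    ∫ x, φ x * w x = 2 * ∫ s in 0..c, φ (n + s) * w (n + s) := by
  rw [integral_eq_add_halves hint hc (hw.ae_mul_eq_zero φ)]
  simp only [hφ, hsymm, two_mul]

lemma integral_mul_of_odd (hw : IsWeightOn w (n - c) (n + c)) (hc : 0 ≤ c)
    (hsymm : ∀ s, w (n - s) = w (n + s)) {φ : ℝ → ℝ} (hφ : ∀ s, φ (n - s) = -φ (n + s))
    (hint : Integrable fun x => φ x * w x) :
    ∫ x, φ x * w x = 0 := by
  rw [integral_eq_add_halves hint hc (hw.ae_mul_eq_zero φ)]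
  simp only [hφ, hsymm, neg_mul, intervalIntegral.integral_neg, neg_add_cancel]

theorem dirichletNeumannBound_of_symm (hw : IsWeightOn w (n - c) (n + c)) (hc : 0 ≤ c)
    (hsymm : ∀ s, w (n - s) = w (n + s)) :
    DirichletNeumannBound (poincareConst w univ) c fun s => w (n + s) := by
  intro f hf hf0
  set F : ℝ → ℝ := fun x => oddExtension f (x - n)
  have hF : LocallyLipschitz F :=
    (locallyLipschitz_oddExtension hf).comp (LocallyLipschitz.id.sub (LocallyLipschitz.const n))
  have F_add (s : ℝ) : F (n + s) = oddExtension f s := by simp [F]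
  have F_sub (s : ℝ) : F (n - s) = -F (n + s) := by simp [F, oddExtension_neg]
  have deriv_F (x : ℝ) : deriv F x = deriv (oddExtension f) (x - n) :=
    deriv_comp_sub_const (oddExtension f) n x
  have hmean : ∫ x, F x * w x = 0 :=
    hw.integral_mul_of_odd hc hsymm F_sub (hw.integrable_mul hF.continuous)
  have hsq : ∫ x, F x ^ 2 * w x = 2 * ∫ s in 0..c, f s ^ 2 * w (n + s) := by
    rw [hw.integral_mul_of_even hc hsymm (φ := fun x => F x ^ 2)
      (fun s => by rw [F_sub, neg_sq]) (hw.integrable_mul (hF.continuous.pow 2))]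
    congr 1
    refine intervalIntegral.integral_congr_Ioo_of_le hc fun s hs => ?_
    simp only [F_add, oddExtension_of_nonneg f hs.1.le, hf0, sub_zero]
  have hderiv : ∫ x, deriv F x ^ 2 * w x = 2 * ∫ s in 0..c, deriv f s ^ 2 * w (n + s) := by
    rw [hw.integral_mul_of_even hc hsymm (φ := fun x => deriv F x ^ 2)
      (fun s => by simp only [deriv_F, sub_sub_cancel_left, deriv_oddExtension_neg,
        add_sub_cancel_left]) (hw.integrable_deriv_sq_mul hF)]
    congr 1
    refine intervalIntegral.integral_congr_Ioo_of_le hc fun s hs => ?_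
    simp only [deriv_F, add_sub_cancel_left, deriv_oddExtension_of_pos f hs.1]
  have key := poincareConst_univ_mul_integral_sq_le (ae_of_all _ hw.nonneg) hF hmean
  rw [hsq, hderiv, mul_left_comm] at key
  exact le_of_mul_le_mul_left key two_pos

end IsWeightOn

/-! ### Comparison of Poincaré constants -/

lemma integral_sq_mul_le_integral_sub_sq_mul {α : Type*} [MeasurableSpace α] {μ : Measure α}
    {f h : α → ℝ} (hh0 : 0 ≤ᵐ[μ] h) (hh : Integrable h μ) (hfh : Integrable (fun x => f x * h x) μ)
    (hf2h : Integrable (fun x => f x ^ 2 * h x) μ) (hmean : ∫ x, f x * h x ∂μ = 0) (a : ℝ) :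
    ∫ x, f x ^ 2 * h x ∂μ ≤ ∫ x, (f x - a) ^ 2 * h x ∂μ := by
  have expand (x : α) :
      (f x - a) ^ 2 * h x = f x ^ 2 * h x - 2 * a * (f x * h x) + a ^ 2 * h x := by
    ring
  calc ∫ x, f x ^ 2 * h x ∂μ
      ≤ ∫ x, f x ^ 2 * h x ∂μ - 2 * a * ∫ x, f x * h x ∂μ + a ^ 2 * ∫ x, h x ∂μ := by
        rw [hmean, mul_zero, sub_zero]
        exact le_add_of_nonneg_right (mul_nonneg (sq_nonneg a) (integral_nonneg_of_ae hh0))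
    _ = ∫ x, (f x - a) ^ 2 * h x ∂μ := by
        have hlin : Integrable (fun x => f x ^ 2 * h x - 2 * a * (f x * h x)) μ :=
          hf2h.sub (hfh.const_mul _)
        simp_rw [expand]
        rw [integral_add hlin (hh.const_mul _),
          integral_sub hf2h (hfh.const_mul _), integral_const_mul, integral_const_mul]

namespace IsWeightOn

variable {h w : ℝ → ℝ} {m n c : ℝ}

lemma mul_integral_sub_sq_le {L : ℝ} (hh : IsWeightOn h (m - c) (m + c)) (hc : 0 ≤ c)
    (hleft : DirichletNeumannBound L c fun s => h (m - s))
    (hright : DirichletNeumannBound L c fun s => h (m + s))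
    {f : ℝ → ℝ} (hf : LocallyLipschitz f) :
    L * ∫ x, (f x - f m) ^ 2 * h x ≤ ∫ x, deriv f x ^ 2 * h x := by
  have hl := hleft (fun s => f (m - s) - f m)
    ((hf.comp ((LocallyLipschitz.const m).sub LocallyLipschitz.id)).sub
      (LocallyLipschitz.const _)) (by simp)
  have hr := hright (fun s => f (m + s) - f m)
    ((hf.comp ((LocallyLipschitz.const m).add LocallyLipschitz.id)).sub
      (LocallyLipschitz.const _)) (by simp)
  simp only [deriv_sub_const, deriv_comp_const_add, deriv_comp_const_sub, neg_sq] at hl hr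
  have hsq : Integrable fun x => (f x - f m) ^ 2 * h x :=
    hh.integrable_mul ((hf.continuous.sub continuous_const).pow 2)
  rw [integral_eq_add_halves hsq hc (hh.ae_mul_eq_zero _),
    integral_eq_add_halves (hh.integrable_deriv_sq_mul hf) hc (hh.ae_mul_eq_zero _), mul_add]
  exact add_le_add hl hr

theorem le_poincareConst {L : ℝ} (hh : IsWeightOn h (m - c) (m + c)) (hne : ¬ h =ᵐ[volume] 0)
    (hL : 0 ≤ L) (hc : 0 ≤ c) (hleft : DirichletNeumannBound L c fun s => h (m - s))
    (hright : DirichletNeumannBound L c fun s => h (m + s)) :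
    L ≤ poincareConst h univ := by
  refine le_poincareConst_univ (hh.exists_mean_zero hne) fun f hf hmean => ?_
  have hvar := integral_sq_mul_le_integral_sub_sq_mul (ae_of_all _ hh.nonneg) hh.integrable
    (hh.integrable_mul hf.continuous) (hh.integrable_mul (hf.continuous.pow 2)) hmean (f m)
  exact (mul_le_mul_of_nonneg_left hvar hL).trans (hh.mul_integral_sub_sq_le hc hleft hright hf)

theorem poincareConst_le_of_antitoneOn_div (hw : IsWeightOn w (n - c) (n + c))
    (hh : IsWeightOn h (m - c) (m + c)) (hne : ¬ h =ᵐ[volume] 0) (hc : 0 ≤ c)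
    (hsymm : ∀ s, w (n - s) = w (n + s)) (hwpos : ∀ s ∈ Ioo 0 c, 0 < w (n + s))
    (hleft : AntitoneOn (fun s => h (m - s) / w (n + s)) (Ioo 0 c))
    (hright : AntitoneOn (fun s => h (m + s) / w (n + s)) (Ioo 0 c)) :
    poincareConst w univ ≤ poincareConst h univ := by
  have hL : 0 ≤ poincareConst w univ := poincareConst_nonneg (ae_of_all _ hw.nonneg)
  have transfer {k : ℝ → ℝ} (hk : Integrable k) (hk0 : 0 ≤ k)
      (hkw : AntitoneOn (fun s => k s / w (n + s)) (Ioo 0 c)) :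
      DirichletNeumannBound (poincareConst w univ) c k :=
    (hw.dirichletNeumannBound_of_symm hc hsymm).of_antitoneOn_div hL hc
      (hw.integrable.comp_add_left n).intervalIntegrable hwpos hk.intervalIntegrable
      (fun s _ => hk0 s) hkw
  exact hh.le_poincareConst hne hL hc
    (transfer (hh.integrable.comp_sub_left m) (fun s => hh.nonneg (m - s)) hleft)
    (transfer (hh.integrable.comp_add_left m) (fun s => hh.nonneg (m + s)) hright)

end IsWeightOn

/-! ### The model density -/

lemma continuous_sKappa (κ : ℝ) : Continuous (sKappa κ) := by
  unfold sKappa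
  split_ifs <;> fun_prop

lemma sKappa_pos {κ θ : ℝ} (hθ : 0 < θ) (hκ : 0 < κ → θ < Real.pi / Real.sqrt κ) :
    0 < sKappa κ θ := by
  unfold sKappa
  split_ifs with hpos hneg
  · have hsqrt := Real.sqrt_pos.2 hpos
    exact div_pos (Real.sin_pos_of_pos_of_lt_pi (mul_pos hsqrt hθ)
      ((lt_div_iff₀' hsqrt).1 (hκ hpos))) hsqrt
  · have hsqrt := Real.sqrt_pos.2 (neg_pos.2 hneg)
    exact div_pos (Real.sinh_pos_iff.2 (mul_pos hsqrt hθ)) hsqrt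
  · exact hθ

section ModelDensity

variable {K N D : ℝ}

lemma modelDensity_eq_indicator (K N D : ℝ) : modelDensity K N D =
    (Icc 0 D).indicator fun x => sKappa (K / (N - 1)) (max x (D - x)) ^ (N - 1) := by
  ext x
  unfold modelDensity
  split_ifs with hleft hright
  · have hx : x ∈ Icc 0 D := ⟨hleft.1, by linarith [hleft.1, hleft.2]⟩
    rw [indicator_of_mem hx, max_eq_right (by linarith [hleft.2])]
  · have hx : x ∈ Icc 0 D := ⟨by linarith [hright.1, hright.2], hright.2⟩
    rw [indicator_of_mem hx, max_eq_left (by linarith [hright.1])]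
  · refine (indicator_of_notMem (fun hx => ?_) _).symm
    rcases le_total x (D / 2) with hle | hle
    exacts [hleft ⟨hx.1, hle⟩, hright ⟨hle, hx.2⟩]

lemma modelDensity_half_sub (K N D s : ℝ) :
    modelDensity K N D (D / 2 - s) = modelDensity K N D (D / 2 + s) := by
  have hmem : D / 2 - s ∈ Icc 0 D ↔ D / 2 + s ∈ Icc 0 D := by
    simp only [mem_Icc]
    constructor <;> rintro ⟨h₁, h₂⟩ <;> constructor <;> linarith
  have hmax : max (D / 2 - s) (D - (D / 2 - s)) = max (D / 2 + s) (D - (D / 2 + s)) := by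
    rw [max_comm]
    congr 1 <;> ring
  simp only [modelDensity_eq_indicator, indicator_apply, hmem, hmax]

lemma modelDensity_of_half_le {x : ℝ} (hx : x ∈ Icc (D / 2) D) :
    modelDensity K N D x = sKappa (K / (N - 1)) x ^ (N - 1) := by
  have hxD : x ∈ Icc 0 D := ⟨by linarith [hx.1, hx.2], hx.2⟩
  rw [modelDensity_eq_indicator, indicator_of_mem hxD, max_eq_left (by linarith [hx.1])]

lemma modelDensity_pos (hD : 0 < D)
    (hDK : 0 < K / (N - 1) → D < Real.pi / Real.sqrt (K / (N - 1))) {x : ℝ} (hx : x ∈ Icc 0 D) :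
    0 < modelDensity K N D x := by
  rw [modelDensity_eq_indicator, indicator_of_mem hx]
  refine Real.rpow_pos_of_pos (sKappa_pos ?_ fun hκ => (max_le hx.2 ?_).trans_lt (hDK hκ)) _
  · rw [lt_max_iff, sub_pos]
    exact (lt_or_ge 0 x).imp_right fun h => h.trans_lt hD
  · linarith [hx.1]

lemma isWeightOn_modelDensity (hN : 1 ≤ N) (hD : 0 < D)
    (hDK : 0 < K / (N - 1) → D < Real.pi / Real.sqrt (K / (N - 1))) :
    IsWeightOn (modelDensity K N D) 0 D where
  nonneg x := by
    by_cases hx : x ∈ Icc 0 D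
    · exact (modelDensity_pos hD hDK hx).le
    · rw [modelDensity_eq_indicator, indicator_of_notMem hx, Pi.zero_apply]
  integrable := by
    rw [modelDensity_eq_indicator, integrable_indicator_iff measurableSet_Icc]
    have : Continuous fun x => sKappa (K / (N - 1)) (max x (D - x)) ^ (N - 1) :=
      ((continuous_sKappa _).comp (by fun_prop)).rpow_const
        fun _ => Or.inr (sub_nonneg.2 hN)
    exact this.integrableOn_Icc
  ae_eq_zero := ae_of_all _ fun x hx => by
    rw [modelDensity_eq_indicator, indicator_of_notMem hx]

end ModelDensity

/-! ### The support of a density -/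

section MeasSupport

variable {h : ℝ → ℝ}

lemma measSupport_eq_support (h : ℝ → ℝ) :
    measSupport h = (volume.withDensity fun y => ENNReal.ofReal (h y)).support :=
  ext fun _ => Metric.nhds_basis_ball.mem_measureSupport.symm

lemma isClosed_measSupport (h : ℝ → ℝ) : IsClosed (measSupport h) :=
  measSupport_eq_support h ▸ Measure.isClosed_support

lemma ae_eq_zero_of_notMem_measSupport (h0 : 0 ≤ h) (hh : AEMeasurable h) :
    ∀ᵐ x, x ∉ measSupport h → h x = 0 := by
  have := (ae_withDensity_iff' hh.ennreal_ofReal).1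
    (Measure.support_mem_ae (μ := volume.withDensity fun y => ENNReal.ofReal (h y)))
  filter_upwards [this] with x hx hxS
  rw [measSupport_eq_support] at hxS
  exact (ENNReal.ofReal_eq_zero.1 (not_imp_comm.1 hx hxS)).antisymm (h0 x)

lemma not_ae_eq_zero_of_nonempty_measSupport (hne : (measSupport h).Nonempty) :
    ¬ h =ᵐ[volume] 0 := by
  rw [measSupport_eq_support, Measure.nonempty_support_iff] at hne
  refine fun hzero => hne ?_
  rw [withDensity_congr_ae (g := 0) (hzero.mono fun x hx => by simp [hx]), withDensity_zero]

lemma exists_mem_measSupport_pos (h0 : 0 ≤ h) (hh : AEMeasurable h)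
    (hne : (measSupport h).Nonempty) : ∃ x ∈ measSupport h, 0 < h x := by
  by_contra! hcon
  refine not_ae_eq_zero_of_nonempty_measSupport hne ?_
  filter_upwards [ae_eq_zero_of_notMem_measSupport h0 hh] with x hx
  by_cases hxS : x ∈ measSupport h
  exacts [(hcon x hxS).antisymm (h0 x), hx hxS]

lemma subset_measSupport_of_isOpen (hh : AEMeasurable h) {U : Set ℝ} (hU : IsOpen U)
    (hpos : ∀ x ∈ U, 0 < h x) : U ⊆ measSupport h := by
  intro x hx
  rw [measSupport_eq_support]
  by_contra hxS
  obtain ⟨V, hV, hV0⟩ := Measure.notMem_support_iff_exists.1 hxS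
  rw [withDensity_apply_eq_zero' hh.ennreal_ofReal] at hV0
  refine (Measure.measure_pos_of_mem_nhds volume (inter_mem (hU.mem_nhds hx) hV)).ne'
    (measure_mono_null (inter_subset_inter_left V fun y hy => ?_) hV0)
  exact (ENNReal.ofReal_pos.2 (hpos y hy)).ne'

lemma isWeightOn_of_measSupport_eq_Icc (h0 : 0 ≤ h) (hh : LocallyIntegrable h) {a b : ℝ}
    (hS : measSupport h = Icc a b) : IsWeightOn h a b := by
  have hzero := ae_eq_zero_of_notMem_measSupport h0 hh.aestronglyMeasurable.aemeasurable
  rw [hS] at hzero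
  exact ⟨h0, (hh.integrableOn_isCompact isCompact_Icc).integrable_of_ae_notMem_eq_zero hzero,
    hzero⟩

lemma exists_eq_Icc_of_ordConnected {S : Set ℝ} (hS : S.OrdConnected) (hcl : IsClosed S)
    (hdiam : 0 < Metric.diam S) :
    ∃ m, S = Icc (m - Metric.diam S / 2) (m + Metric.diam S / 2) := by
  have hbdd : Bornology.IsBounded S := not_imp_comm.1 Metric.diam_eq_zero_of_unbounded hdiam.ne'
  have hne : S.Nonempty := nonempty_iff_ne_empty.2 fun h => by simp [h] at hdiam
  refine ⟨(sInf S + sSup S) / 2, ?_⟩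
  rw [Real.diam_eq hbdd]
  refine (eq_Icc_of_connected_compact ⟨hne, hS.isPreconnected⟩
    (Metric.isCompact_of_isClosed_isBounded hcl hbdd)).trans (congrArg₂ Icc ?_ ?_) <;> ring

end MeasSupport

/-! ### `MCP` densities -/

namespace IsMCPDensity

variable {K N : ℝ} {h : ℝ → ℝ} {x₀ x₁ y : ℝ}

lemma aemeasurable (hM : IsMCPDensity K N h) : AEMeasurable h :=
  hM.2.1.aestronglyMeasurable.aemeasurable

lemma abs_sub_lt (hM : IsMCPDensity K N h) (hN : 1 < N) (h₀ : x₀ ∈ measSupport h)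
    (h₁ : x₁ ∈ measSupport h) (hne : x₀ ≠ x₁) (hκ : 0 < K / (N - 1)) :
    |x₁ - x₀| < Real.pi / Real.sqrt (K / (N - 1)) :=
  (hM.2.2 x₀ h₀ x₁ h₁).1 ((div_pos_iff_of_pos_right (sub_pos.2 hN)).1 hκ) hne

-- Bishop–Gromov monotonicity, seen from `x₁`.
lemma div_le_div (hM : IsMCPDensity K N h) (hN : 1 < N) (h₀ : x₀ ∈ measSupport h)
    (h₁ : x₁ ∈ measSupport h) (hne : y ≠ x₁) (hy : y ∈ uIcc x₀ x₁) :
    h x₀ / sKappa (K / (N - 1)) |x₁ - x₀| ^ (N - 1) ≤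
      h y / sKappa (K / (N - 1)) |x₁ - y| ^ (N - 1) := by
  have h01 : x₀ ≠ x₁ := by
    rintro rfl
    exact hne (by simpa using hy)
  rw [← segment_eq_uIcc, segment_eq_image] at hy
  obtain ⟨t, ht, rfl⟩ := hy
  simp only [smul_eq_mul] at hne ⊢
  have hd : 0 < |x₁ - x₀| := abs_pos.2 (sub_ne_zero.2 h01.symm)
  have ht1 : 0 < 1 - t := sub_pos.2 (ht.2.lt_of_ne (by rintro rfl; simp at hne))
  have hdist : |x₁ - ((1 - t) * x₀ + t * x₁)| = (1 - t) * |x₁ - x₀| := by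
    rw [← abs_of_pos ht1, ← abs_mul, abs_of_pos ht1]
    ring_nf
  have hs₀ : 0 < sKappa (K / (N - 1)) |x₁ - x₀| := sKappa_pos hd (hM.abs_sub_lt hN h₀ h₁ h01)
  have hs_y : 0 < sKappa (K / (N - 1)) ((1 - t) * |x₁ - x₀|) :=
    sKappa_pos (mul_pos ht1 hd) fun hκ =>
      (mul_le_of_le_one_left hd.le (sub_le_self 1 ht.1)).trans_lt (hM.abs_sub_lt hN h₀ h₁ h01 hκ)
  have mcp := (hM.2.2 x₀ h₀ x₁ h₁).2 t ht
  rw [Real.div_rpow hs_y.le hs₀.le, add_comm (t * x₁), div_mul_eq_mul_div,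
    div_le_iff₀ (by positivity)] at mcp
  rw [hdist, div_le_div_iff₀ (by positivity) (by positivity)]
  linarith

lemma antitoneOn_div (hM : IsMCPDensity K N h) (hN : 1 < N) {a : ℝ} (ha : a ∈ measSupport h) :
    AntitoneOn (fun y => h y / sKappa (K / (N - 1)) (y - a) ^ (N - 1))
      (measSupport h ∩ Ioi a) := by
  rintro y ⟨-, hy : a < y⟩ z ⟨hz, haz : a < z⟩ hyz
  have := hM.div_le_div hN hz ha hy.ne' (mem_uIcc_of_ge hy.le hyz)
  rwa [abs_sub_comm, abs_of_pos (sub_pos.2 haz), abs_sub_comm, abs_of_pos (sub_pos.2 hy)] at this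

lemma monotoneOn_div (hM : IsMCPDensity K N h) (hN : 1 < N) {b : ℝ} (hb : b ∈ measSupport h) :
    MonotoneOn (fun y => h y / sKappa (K / (N - 1)) (b - y) ^ (N - 1))
      (measSupport h ∩ Iio b) := by
  rintro z ⟨hz, hzb : z < b⟩ y ⟨-, hy : y < b⟩ hzy
  have := hM.div_le_div hN hz hb hy.ne (mem_uIcc_of_le hzy hy.le)
  rwa [abs_of_pos (sub_pos.2 hzb), abs_of_pos (sub_pos.2 hy)] at this

lemma pos_of_mem_uIcc (hM : IsMCPDensity K N h) (hN : 1 < N) (h₀ : x₀ ∈ measSupport h)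
    (h₁ : x₁ ∈ measSupport h) (hne : y ≠ x₁) (hy : y ∈ uIcc x₀ x₁) (hpos : 0 < h x₀) :
    0 < h y := by
  have h01 : x₀ ≠ x₁ := by
    rintro rfl
    exact hne (by simpa using hy)
  have hs₀ : 0 < sKappa (K / (N - 1)) |x₁ - x₀| :=
    sKappa_pos (abs_pos.2 (sub_ne_zero.2 h01.symm)) (hM.abs_sub_lt hN h₀ h₁ h01)
  refine (hM.1 y).lt_of_ne fun hy0 => ?_
  have := hM.div_le_div hN h₀ h₁ hne hy
  rw [← hy0, zero_div] at this
  exact this.not_gt (div_pos hpos (Real.rpow_pos_of_pos hs₀ _))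

lemma pos_of_mem_Ioo (hM : IsMCPDensity K N h) (hN : 1 < N) (h₀ : x₀ ∈ measSupport h)
    (h₁ : x₁ ∈ measSupport h) (hy : y ∈ Ioo x₀ x₁) : 0 < h y := by
  obtain ⟨p, hp, hpos⟩ := exists_mem_measSupport_pos hM.1 hM.aemeasurable ⟨x₀, h₀⟩
  rcases le_total p y with hle | hle
  · exact hM.pos_of_mem_uIcc hN hp h₁ hy.2.ne (mem_uIcc_of_le hle hy.2.le) hpos
  · exact hM.pos_of_mem_uIcc hN hp h₀ hy.1.ne' (mem_uIcc_of_ge hy.1.le hle) hpos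

lemma ordConnected_measSupport (hM : IsMCPDensity K N h) (hN : 1 < N) :
    (measSupport h).OrdConnected :=
  ordConnected_of_Ioo fun _ h₀ _ h₁ _ =>
    subset_measSupport_of_isOpen hM.aemeasurable isOpen_Ioo fun _ => hM.pos_of_mem_Ioo hN h₀ h₁

section Halves

variable {D m : ℝ}

lemma antitoneOn_div_modelDensity_right (hM : IsMCPDensity K N h) (hN : 1 < N)
    (hS : measSupport h = Icc (m - D / 2) (m + D / 2)) :
    AntitoneOn (fun s => h (m + s) / modelDensity K N D (D / 2 + s)) (Ioo 0 (D / 2)) := by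
  have hmem {s : ℝ} (hs : s ∈ Ioo 0 (D / 2)) : m + s ∈ measSupport h ∩ Ioi (m - D / 2) :=
    ⟨hS ▸ ⟨by linarith [hs.1, hs.2], by linarith [hs.2]⟩, mem_Ioi.2 (by linarith [hs.1, hs.2])⟩
  have hmodel {s : ℝ} (hs : s ∈ Ioo 0 (D / 2)) : modelDensity K N D (D / 2 + s) =
      sKappa (K / (N - 1)) (m + s - (m - D / 2)) ^ (N - 1) := by
    rw [modelDensity_of_half_le ⟨by linarith [hs.1], by linarith [hs.2]⟩]
    ring_nf
  intro r hr s hs hrs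
  have hleft_end : m - D / 2 ∈ measSupport h := hS ▸ left_mem_Icc.2 (by linarith [hr.1, hr.2])
  simp only [hmodel hr, hmodel hs]
  exact hM.antitoneOn_div hN hleft_end (hmem hr) (hmem hs) (add_le_add_right hrs m)

lemma antitoneOn_div_modelDensity_left (hM : IsMCPDensity K N h) (hN : 1 < N)
    (hS : measSupport h = Icc (m - D / 2) (m + D / 2)) :
    AntitoneOn (fun s => h (m - s) / modelDensity K N D (D / 2 + s)) (Ioo 0 (D / 2)) := by
  have hmem {s : ℝ} (hs : s ∈ Ioo 0 (D / 2)) : m - s ∈ measSupport h ∩ Iio (m + D / 2) :=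
    ⟨hS ▸ ⟨by linarith [hs.2], by linarith [hs.1, hs.2]⟩, mem_Iio.2 (by linarith [hs.1, hs.2])⟩
  have hmodel {s : ℝ} (hs : s ∈ Ioo 0 (D / 2)) : modelDensity K N D (D / 2 + s) =
      sKappa (K / (N - 1)) (m + D / 2 - (m - s)) ^ (N - 1) := by
    rw [modelDensity_of_half_le ⟨by linarith [hs.1], by linarith [hs.2]⟩]
    ring_nf
  intro r hr s hs hrs
  have hright_end : m + D / 2 ∈ measSupport h := hS ▸ right_mem_Icc.2 (by linarith [hr.1, hr.2])
  simp only [hmodel hr, hmodel hs]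
  exact hM.monotoneOn_div hN hright_end (hmem hs) (hmem hr) (sub_le_sub_left hrs m)

end Halves

end IsMCPDensity

/-- Sharp spectral-gap comparison for `MCP(K,N)` densities of diameter exactly `D`
(Proposition 4.9). -/
theorem stmt_8 (K N D : ℝ) (hN : 1 < N) (hD : 0 < D)
    (h : ℝ → ℝ) (hMCP : IsMCPDensity K N h)
    (hdiam : Metric.diam (measSupport h) = D) :
    poincareConst (modelDensity K N D) Set.univ ≤ poincareConst h Set.univ := by
  obtain ⟨m, hS⟩ := exists_eq_Icc_of_ordConnected (hMCP.ordConnected_measSupport hN)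
    (isClosed_measSupport h) (hdiam ▸ hD)
  rw [hdiam] at hS
  have hleft : m - D / 2 ∈ measSupport h := hS ▸ left_mem_Icc.2 (by linarith)
  have hright : m + D / 2 ∈ measSupport h := hS ▸ right_mem_Icc.2 (by linarith)
  have hDK : 0 < K / (N - 1) → D < Real.pi / Real.sqrt (K / (N - 1)) := fun hκ => by
    have := hMCP.abs_sub_lt hN hleft hright (by linarith) hκ
    rwa [add_sub_sub_cancel, add_halves, abs_of_pos hD] at this
  have hmodel : IsWeightOn (modelDensity K N D) (D / 2 - D / 2) (D / 2 + D / 2) := by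
    simpa only [sub_self, add_halves] using isWeightOn_modelDensity hN.le hD hDK
  exact hmodel.poincareConst_le_of_antitoneOn_div
    (isWeightOn_of_measSupport_eq_Icc hMCP.1 hMCP.2.1 hS)
    (not_ae_eq_zero_of_nonempty_measSupport ⟨_, hleft⟩) (by linarith)
    (modelDensity_half_sub K N D)
    (fun s hs => modelDensity_pos hD hDK ⟨by linarith [hs.1], by linarith [hs.2]⟩)
    (hMCP.antitoneOn_div_modelDensity_left hN hS)
    (hMCP.antitoneOn_div_modelDensity_right hN hS)
end
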